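/- Let u be an AB-entropy solution of u_t + f(x,u)_x = 0 on ℝ × [0,∞). Then the set-valued map x ↦ C_0(u,x) has closed graph: if x_n → x in ℝ, y_n ∈ C_0(u, x_n) for every n, and y_n → y in ℝ, then y ∈ C_0(u, x). -/

import Mathlib

open MeasureTheory Set Filter

noncomputable section

/-- The discontinuous flux `f(x,u) = f_l(u)` for `x < 0`, `f_r(u)` for `x > 0`
(the value at the interface is taken to be `f_r(u)`). -/
def dflux (fl fr : ℝ → ℝ) (x u : ℝ) : ℝ := if x < 0 then fl u else fr u

/-- The connection function `c^{AB}`. -/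
def cAB (A B : ℝ) (x : ℝ) : ℝ := if x ≤ 0 then A else B

/-- An `AB`-entropy solution of `u_t + f(x,u)_x = 0` on `ℝ × [0,∞)` with
initial datum `u0`, for the flux `f(x,·) = fl` on `x<0` and `fr` on `x>0`,
relative to the connection `(A,B)`.  The structure bundles the solution `u`
(as a function of `(x,t)`), its one-sided spatial limits `um x t = u(x-,t)` and
`up x t = u(x+,t)` (for `t > 0`), the weak (distributional) formulation, the
Kružkov entropy inequalities away from the interface, the `AB`-interface
entropy inequality, `L¹_loc`-continuity in time and the initial condition. -/
structure ABSol (fl fr : ℝ → ℝ) (A B : ℝ) (u0 : ℝ → ℝ) where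
  u : ℝ → ℝ → ℝ
  meas : Measurable (Function.uncurry u)
  bdd : ∃ M : ℝ, ∀ x t, |u x t| ≤ M
  um : ℝ → ℝ → ℝ
  up : ℝ → ℝ → ℝ
  um_spec : ∀ x t, 0 < t →
    Tendsto (fun y => u y t) (nhdsWithin x (Iio x)) (nhds (um x t))
  up_spec : ∀ x t, 0 < t →
    Tendsto (fun y => u y t) (nhdsWithin x (Ioi x)) (nhds (up x t))
  weak : ∀ φ : ℝ → ℝ → ℝ,
    ContDiff ℝ 1 (fun p : ℝ × ℝ => φ p.1 p.2) →
    HasCompactSupport (fun p : ℝ × ℝ => φ p.1 p.2) →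
    (∀ x t, t ≤ 0 → φ x t = 0) →
    (∫ p : ℝ × ℝ, (u p.1 p.2 * deriv (fun s => φ p.1 s) p.2 +
        dflux fl fr p.1 (u p.1 p.2) * deriv (fun y => φ y p.2) p.1)) = 0
  kruzkov_l : ∀ (k : ℝ) (φ : ℝ → ℝ → ℝ),
    ContDiff ℝ 1 (fun p : ℝ × ℝ => φ p.1 p.2) →
    HasCompactSupport (fun p : ℝ × ℝ => φ p.1 p.2) →
    (∀ x t, 0 ≤ φ x t) →
    (∀ x t, 0 ≤ x ∨ t ≤ 0 → φ x t = 0) →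
    0 ≤ ∫ p : ℝ × ℝ, (|u p.1 p.2 - k| * deriv (fun s => φ p.1 s) p.2 +
        Real.sign (u p.1 p.2 - k) * (fl (u p.1 p.2) - fl k) *
          deriv (fun y => φ y p.2) p.1)
  kruzkov_r : ∀ (k : ℝ) (φ : ℝ → ℝ → ℝ),
    ContDiff ℝ 1 (fun p : ℝ × ℝ => φ p.1 p.2) →
    HasCompactSupport (fun p : ℝ × ℝ => φ p.1 p.2) →
    (∀ x t, 0 ≤ φ x t) →
    (∀ x t, x ≤ 0 ∨ t ≤ 0 → φ x t = 0) →
    0 ≤ ∫ p : ℝ × ℝ, (|u p.1 p.2 - k| * deriv (fun s => φ p.1 s) p.2 +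
        Real.sign (u p.1 p.2 - k) * (fr (u p.1 p.2) - fr k) *
          deriv (fun y => φ y p.2) p.1)
  interfaceEntropy : ∀ φ : ℝ → ℝ → ℝ,
    ContDiff ℝ 1 (fun p : ℝ × ℝ => φ p.1 p.2) →
    HasCompactSupport (fun p : ℝ × ℝ => φ p.1 p.2) →
    (∀ x t, 0 ≤ φ x t) →
    (∀ x t, t ≤ 0 → φ x t = 0) →
    0 ≤ ∫ p : ℝ × ℝ, (|u p.1 p.2 - cAB A B p.1| * deriv (fun s => φ p.1 s) p.2 +
        Real.sign (u p.1 p.2 - cAB A B p.1) *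
          (dflux fl fr p.1 (u p.1 p.2) - dflux fl fr p.1 (cAB A B p.1)) *
          deriv (fun y => φ y p.2) p.1)
  timeCont : ∀ (r t₀ : ℝ), 0 ≤ t₀ →
    Tendsto (fun t => ∫ x in Icc (-r) r, |u x t - u x t₀|)
      (nhdsWithin t₀ (Ici 0)) (nhds 0)
  init : ∀ᵐ x : ℝ ∂volume, u x 0 = u0 x

/-- `AB`-genuine/interface characteristic for the `AB`-entropy solution `sol`,
on the time interval `[0,T]`, where `γ = f_l(A) = f_r(B)`. -/
def IsABgic (T : ℝ) (fl fr : ℝ → ℝ) (γ : ℝ) {A B : ℝ} {u0 : ℝ → ℝ}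
    (sol : ABSol fl fr A B u0) (ζ : ℝ → ℝ) : Prop :=
  (∃ K : NNReal, LipschitzOnWith K ζ (Icc 0 T)) ∧
  (∀ᵐ t ∂(volume.restrict (Icc 0 T)),
    (ζ t < 0 → HasDerivAt ζ (deriv fl (sol.um (ζ t) t)) t ∧
      deriv fl (sol.um (ζ t) t) = deriv fl (sol.up (ζ t) t)) ∧
    (0 < ζ t → HasDerivAt ζ (deriv fr (sol.um (ζ t) t)) t ∧
      deriv fr (sol.um (ζ t) t) = deriv fr (sol.up (ζ t) t)) ∧
    (ζ t = 0 → fl (sol.um 0 t) = γ ∧ fr (sol.up 0 t) = γ))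

/-- `C(u,x)`: the set of `AB`-genuine/interface characteristics of `sol`
reaching `x` at time `T`. -/
def charSet (T : ℝ) (fl fr : ℝ → ℝ) (γ : ℝ) {A B : ℝ} {u0 : ℝ → ℝ}
    (sol : ABSol fl fr A B u0) (x : ℝ) : Set (ℝ → ℝ) :=
  {ζ | IsABgic T fl fr γ sol ζ ∧ ζ T = x}

/-- `C₀(u,x)`: the set of initial positions `ζ(0)` of characteristics in `C(u,x)`. -/
def charSet0 (T : ℝ) (fl fr : ℝ → ℝ) (γ : ℝ) {A B : ℝ} {u0 : ℝ → ℝ}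
    (sol : ABSol fl fr A B u0) (x : ℝ) : Set ℝ :=
  (fun ζ : ℝ → ℝ => ζ 0) '' charSet T fl fr γ sol x

/-- Membership in `L^∞(ℝ)`: measurable and (essentially) bounded. -/
def IsLinf (g : ℝ → ℝ) : Prop :=
  Measurable g ∧ ∃ M : ℝ, ∀ᵐ x : ℝ ∂volume, |g x| ≤ M

/-- `ω ∈ A^{[AB]}(T)`: the profile `ω` is attainable at time `T`. -/
def Attainable (T : ℝ) (fl fr : ℝ → ℝ) (A B : ℝ) (ω : ℝ → ℝ) : Prop :=
  ∃ u0 : ℝ → ℝ, IsLinf u0 ∧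
    ∃ sol : ABSol fl fr A B u0, ∀ᵐ x : ℝ ∂volume, sol.u x T = ω x

/-- `I_T^{[AB]}(ω)`: the set of (bounded) initial data whose `AB`-entropy
solution coincides a.e. with `ω` at time `T`. -/
def InitialSet (T : ℝ) (fl fr : ℝ → ℝ) (A B : ℝ) (ω : ℝ → ℝ) : Set (ℝ → ℝ) :=
  {u0 | IsLinf u0 ∧
    ∃ sol : ABSol fl fr A B u0, ∀ᵐ x : ℝ ∂volume, sol.u x T = ω x}

/-- `x` is a point of continuity of `ω`: the one-sided limits exist and coincide. -/
def ContinuityPt (ω : ℝ → ℝ) (x : ℝ) : Prop :=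
  ∃ l : ℝ, Tendsto ω (nhdsWithin x (Iio x)) (nhds l) ∧
    Tendsto ω (nhdsWithin x (Ioi x)) (nhds l)

open scoped Topology

/-!
A solution `u` has a Lipschitz potential `U` with `U_x = u` and `U_t = -f(x, u)`. Along a
Lipschitz curve `Z` the potential changes at the rate `Z' u - f(x, u)`, where either one-sided
trace of `u` may be used. If `Z' = f'(u)`, this rate is the Legendre transform of the flux at
`Z'`, so on each side of the interface `U` grows along `Z` at least as much as the potential
`w x - f(w) t` of any constant state `w`; likewise it dominates everywhere the potential of the
connection, which grows at the rate `-γ` along the interface. Conversely, these inequalities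
characterise the AB-gics among Lipschitz curves: off the interface the traces of `u` attain the
supremum of `w ↦ Z' w - f(w)`, so `Z' = f'(u)`, and on the interface they bound `f_l(u(0-, t))`
above by `γ`, while the interface entropy condition bounds it below.

The inequalities only involve the values of `U` along `Z`, hence pass to locally uniform limits.
Since the AB-gics are equi-Lipschitz, the Arzelà–Ascoli theorem makes the part of the graph of
`x ↦ C₀(u, x)` over bounded initial positions the continuous image of a compact set of curves.
-/

/-- A measurable function with bounded range: the class of integrands for which every integral
over a bounded set, or against an integrable weight, is meaningful. -/
def BddMeasurable {α : Type*} [MeasurableSpace α] (g : α → ℝ) : Prop :=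
  Measurable g ∧ ∃ M, ∀ a, |g a| ≤ M

namespace BddMeasurable

section Closure

variable {α β : Type*} [MeasurableSpace α] [MeasurableSpace β] {g h : α → ℝ}

lemma comp {φ : β → α} (hg : BddMeasurable g) (hφ : Measurable φ) :
    BddMeasurable fun b => g (φ b) :=
  ⟨hg.1.comp hφ, hg.2.imp fun _ hM b => hM (φ b)⟩

lemma neg (hg : BddMeasurable g) : BddMeasurable fun a => -g a :=
  ⟨hg.1.neg, hg.2.imp fun _ hM a => (abs_neg _).trans_le (hM a)⟩

lemma add (hg : BddMeasurable g) (hh : BddMeasurable h) : BddMeasurable fun a => g a + h a := by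
  obtain ⟨⟨hgm, M, hM⟩, ⟨hhm, N, hN⟩⟩ := And.intro hg hh
  exact ⟨hgm.add hhm, M + N, fun a => (abs_add_le _ _).trans (add_le_add (hM a) (hN a))⟩

lemma sub (hg : BddMeasurable g) (hh : BddMeasurable h) : BddMeasurable fun a => g a - h a := by
  simpa only [sub_eq_add_neg] using hg.add hh.neg

lemma mul (hg : BddMeasurable g) (hh : BddMeasurable h) : BddMeasurable fun a => g a * h a := by
  obtain ⟨⟨hgm, M, hM⟩, ⟨hhm, N, hN⟩⟩ := And.intro hg hh
  refine ⟨hgm.mul hhm, M * N, fun a => (abs_mul _ _).trans_le ?_⟩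
  exact mul_le_mul (hM a) (hN a) (abs_nonneg _) ((abs_nonneg _).trans (hM a))

lemma ite {s : Set α} [DecidablePred (· ∈ s)] (hs : MeasurableSet s) (hg : BddMeasurable g)
    (hh : BddMeasurable h) : BddMeasurable fun a => if a ∈ s then g a else h a := by
  obtain ⟨⟨hgm, M, hM⟩, ⟨hhm, N, hN⟩⟩ := And.intro hg hh
  refine ⟨hgm.ite hs hhm, max M N, fun a => ?_⟩
  dsimp only
  split_ifs
  exacts [(hM a).trans (le_max_left _ _), (hN a).trans (le_max_right _ _)]

lemma continuous_comp {f : ℝ → ℝ} (hf : Continuous f) (hg : BddMeasurable g) :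
    BddMeasurable fun a => f (g a) := by
  obtain ⟨hgm, M, hM⟩ := hg
  obtain ⟨N, hN⟩ := isCompact_Icc.exists_bound_of_continuousOn (s := Icc (-M) M) hf.continuousOn
  exact ⟨hf.measurable.comp hgm, N, fun a => hN _ (abs_le.1 (hM a))⟩

lemma integrable_mul {μ : Measure α} (hg : BddMeasurable g) {φ : α → ℝ} (hφ : Integrable φ μ) :
    Integrable (fun a => φ a * g a) μ := by
  obtain ⟨hgm, M, hM⟩ := hg
  exact hφ.mul_bdd hgm.aestronglyMeasurable (Eventually.of_forall hM)

end Closure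

lemma locallyIntegrable {g : ℝ → ℝ} (hg : BddMeasurable g) : LocallyIntegrable g := by
  obtain ⟨hgm, M, hM⟩ := hg
  exact (locallyIntegrable_const M).mono hgm.aestronglyMeasurable
    (Eventually.of_forall fun x => (hM x).trans (le_abs_self M))

lemma intervalIntegrable {g : ℝ → ℝ} (hg : BddMeasurable g) (a b : ℝ) :
    IntervalIntegrable g volume a b :=
  intervalIntegrable_iff.2 <|
    (hg.locallyIntegrable.integrableOn_isCompact isCompact_uIcc).mono_set uIoc_subset_uIcc

end BddMeasurable

lemma ae_hasDerivAt_of_sub_eq_integral {D I : ℝ → ℝ} (hI : BddMeasurable I)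
    (h : ∀ s t, 0 < s → s ≤ t → D t - D s = ∫ τ in s..t, I τ) :
    ∀ᵐ t, 0 < t → HasDerivAt D (I t) t := by
  filter_upwards [_root_.LocallyIntegrable.ae_hasDerivAt_integral hI.locallyIntegrable] with t ht h0
  refine ((ht (t / 2)).add_const (D (t / 2))).congr_of_eventuallyEq ?_
  filter_upwards [Ioi_mem_nhds (half_lt_self h0)] with r hr
  linarith [h (t / 2) r (half_pos h0) (le_of_lt hr)]

lemma ae_nonneg_of_integral_nonneg {I : ℝ → ℝ} (hI : BddMeasurable I)
    (h : ∀ s t, 0 < s → s ≤ t → 0 ≤ ∫ τ in s..t, I τ) : ∀ᵐ t, 0 < t → 0 ≤ I t := by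
  filter_upwards [ae_hasDerivAt_of_sub_eq_integral (D := fun t => ∫ τ in (0 : ℝ)..t, I τ) hI
    fun s t _ _ => intervalIntegral.integral_interval_sub_left (hI.intervalIntegrable _ _)
      (hI.intervalIntegrable _ _)] with t ht h0
  refine ge_of_tendsto (ht h0).tendsto_slope_zero_right ?_
  filter_upwards [self_mem_nhdsWithin] with r hr
  have hr : 0 < r := hr
  rw [intervalIntegral.integral_interval_sub_left (hI.intervalIntegrable _ _)
    (hI.intervalIntegrable _ _)]
  exact mul_nonneg (inv_nonneg.2 hr.le) (h t (t + r) h0 (by linarith))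

/-! ### Smooth cutoff functions -/

/-- The smooth step rising from `0` at `c` to `1` at `c + e`. -/
def smoothStep (c e x : ℝ) : ℝ := Real.smoothTransition ((x - c) / e)

lemma deriv_smoothTransition_nonneg (y : ℝ) : 0 ≤ deriv Real.smoothTransition y :=
  Real.smoothTransition.monotone.deriv_nonneg

lemma deriv_smoothTransition_eq_zero {y : ℝ} (hy : y ∉ Ioo (0 : ℝ) 1) :
    deriv Real.smoothTransition y = 0 := by
  rcases le_or_gt y 0 with h0 | h0
  · refine IsLocalMin.deriv_eq_zero (Eventually.of_forall fun z => ?_)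
    simpa only [Real.smoothTransition.zero_of_nonpos h0] using Real.smoothTransition.nonneg z
  · have h1 : 1 ≤ y := not_lt.1 fun h => hy ⟨h0, h⟩
    refine IsLocalMax.deriv_eq_zero (Eventually.of_forall fun z => ?_)
    simpa only [Real.smoothTransition.one_of_one_le h1] using Real.smoothTransition.le_one z

lemma continuous_deriv_smoothTransition : Continuous (deriv Real.smoothTransition) :=
  (Real.smoothTransition.contDiff (n := 1)).continuous_deriv le_rfl

lemma integrable_deriv_smoothTransition : Integrable (deriv Real.smoothTransition) :=
  continuous_deriv_smoothTransition.integrable_of_hasCompactSupport <|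
    HasCompactSupport.intro (isCompact_Icc (a := (0 : ℝ)) (b := 1)) fun _ hy =>
      deriv_smoothTransition_eq_zero fun h => hy (Ioo_subset_Icc_self h)

lemma integral_deriv_smoothTransition : ∫ y, deriv Real.smoothTransition y = 1 := by
  have hsupp : ∀ y ∉ Ioc (0 : ℝ) 1, deriv Real.smoothTransition y = 0 := fun y hy =>
    deriv_smoothTransition_eq_zero fun h => hy (Ioo_subset_Ioc_self h)
  rw [← setIntegral_eq_integral_of_forall_compl_eq_zero hsupp,
    ← intervalIntegral.integral_of_le zero_le_one,
    intervalIntegral.integral_deriv_eq_sub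
      (fun _ _ => (Real.smoothTransition.contDiff (n := 1)).differentiable one_ne_zero _)
      (continuous_deriv_smoothTransition.intervalIntegrable _ _),
    Real.smoothTransition.one, Real.smoothTransition.zero, sub_zero]

section SmoothStep

variable {c e x : ℝ}

lemma contDiff_smoothStep (c e : ℝ) : ContDiff ℝ 1 (smoothStep c e) :=
  Real.smoothTransition.contDiff.comp ((contDiff_id.sub contDiff_const).div_const e)

lemma smoothStep_eq_zero (he : 0 < e) (hx : x ≤ c) : smoothStep c e x = 0 :=
  Real.smoothTransition.zero_of_nonpos (div_nonpos_of_nonpos_of_nonneg (by linarith) he.le)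

lemma smoothStep_eq_one (he : 0 < e) (hx : c + e ≤ x) : smoothStep c e x = 1 :=
  Real.smoothTransition.one_of_one_le ((one_le_div he).2 (by linarith))

lemma deriv_smoothStep (c e x : ℝ) :
    deriv (smoothStep c e) x = deriv Real.smoothTransition ((x - c) / e) / e := by
  have hS := (Real.smoothTransition.contDiff (n := 1)).differentiable one_ne_zero ((x - c) / e)
  have hlin : HasDerivAt (fun x : ℝ => (x - c) / e) (1 / e) x :=
    ((hasDerivAt_id x).sub_const c).div_const e
  exact (hS.hasDerivAt.comp x hlin).deriv.trans (mul_one_div _ _)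

lemma integral_deriv_smoothStep_mul (he : 0 < e) (h : ℝ → ℝ) :
    ∫ x, deriv (smoothStep c e) x * h x =
      ∫ y, deriv Real.smoothTransition y * h (c + e * y) := by
  let g : ℝ → ℝ := fun z => deriv Real.smoothTransition (z / e) / e * h (c + z)
  calc ∫ x, deriv (smoothStep c e) x * h x
      = ∫ x, g (x - c) := by simp only [g, deriv_smoothStep, add_sub_cancel]
    _ = ∫ z, g z := integral_sub_right_eq_self g c
    _ = e * ∫ y, g (e * y) := by
        rw [Measure.integral_comp_mul_left g e, abs_of_pos (inv_pos.2 he), smul_eq_mul,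
          mul_inv_cancel_left₀ he.ne']
    _ = ∫ y, deriv Real.smoothTransition y * h (c + e * y) := by
        rw [← integral_const_mul]
        refine integral_congr_ae (Eventually.of_forall fun y => ?_)
        simp only [g, mul_div_cancel_left₀ _ he.ne']
        field_simp

lemma abs_integral_deriv_smoothStep_mul_le (he : 0 < e) {h : ℝ → ℝ} {M : ℝ}
    (hM : ∀ x, |h x| ≤ M) : |∫ x, deriv (smoothStep c e) x * h x| ≤ M := by
  have hbound : ∀ y, ‖deriv Real.smoothTransition y * h (c + e * y)‖ ≤
      deriv Real.smoothTransition y * M := fun y => by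
    rw [norm_mul, Real.norm_of_nonneg (deriv_smoothTransition_nonneg y)]
    exact mul_le_mul_of_nonneg_left (hM _) (deriv_smoothTransition_nonneg y)
  rw [integral_deriv_smoothStep_mul he]
  refine (norm_integral_le_of_norm_le (integrable_deriv_smoothTransition.mul_const M)
    (Eventually.of_forall hbound)).trans_eq ?_
  rw [integral_mul_const, integral_deriv_smoothTransition, one_mul]

lemma tendsto_integral_deriv_smoothStep_mul {h : ℝ → ℝ} (hh : BddMeasurable h) {c : ℝ → ℝ}
    {l : ℝ} (hl : ∀ y ∈ Ioo (0 : ℝ) 1, Tendsto (fun e => h (c e + e * y)) (𝓝[>] 0) (𝓝 l)) :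
    Tendsto (fun e => ∫ x, deriv (smoothStep (c e) e) x * h x) (𝓝[>] 0) (𝓝 l) := by
  obtain ⟨hm, M, hM⟩ := hh
  suffices Tendsto (fun e => ∫ y, deriv Real.smoothTransition y * h (c e + e * y)) (𝓝[>] 0)
      (𝓝 (∫ y, deriv Real.smoothTransition y * l)) by
    rw [integral_mul_const, integral_deriv_smoothTransition, one_mul] at this
    refine this.congr' ?_
    filter_upwards [self_mem_nhdsWithin] with e he
    exact (integral_deriv_smoothStep_mul he h).symm
  refine tendsto_integral_filter_of_dominated_convergence
    (fun y => |deriv Real.smoothTransition y| * M) (Eventually.of_forall fun e => ?_)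
    (Eventually.of_forall fun e => Eventually.of_forall fun y => ?_)
    (integrable_deriv_smoothTransition.abs.mul_const M) (Eventually.of_forall fun y => ?_)
  · exact (continuous_deriv_smoothTransition.measurable.mul
      (hm.comp (by fun_prop))).aestronglyMeasurable
  · rw [Real.norm_eq_abs, abs_mul]
    exact mul_le_mul_of_nonneg_left (hM _) (abs_nonneg _)
  · by_cases hy : y ∈ Ioo (0 : ℝ) 1
    · exact (hl y hy).const_mul _
    · simp only [deriv_smoothTransition_eq_zero hy, zero_mul, tendsto_const_nhds]

lemma tendsto_integral_deriv_smoothStep_mul_right {h : ℝ → ℝ} (hh : BddMeasurable h) {l : ℝ}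
    (hl : Tendsto h (𝓝[>] c) (𝓝 l)) :
    Tendsto (fun e => ∫ x, deriv (smoothStep c e) x * h x) (𝓝[>] 0) (𝓝 l) := by
  refine tendsto_integral_deriv_smoothStep_mul hh fun y hy => hl.comp ?_
  refine tendsto_nhdsWithin_iff.2 ⟨?_, ?_⟩
  · exact ((by fun_prop : Continuous fun e => c + e * y).tendsto' 0 c (by ring)).mono_left
      nhdsWithin_le_nhds
  · filter_upwards [self_mem_nhdsWithin] with e he
    exact lt_add_of_pos_right c (mul_pos he hy.1)

lemma tendsto_integral_deriv_smoothStep_mul_left {h : ℝ → ℝ} (hh : BddMeasurable h) {l : ℝ}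
    (hl : Tendsto h (𝓝[<] c) (𝓝 l)) :
    Tendsto (fun e => ∫ x, deriv (smoothStep (c - e) e) x * h x) (𝓝[>] 0) (𝓝 l) := by
  refine tendsto_integral_deriv_smoothStep_mul hh fun y hy => hl.comp ?_
  refine tendsto_nhdsWithin_iff.2 ⟨?_, ?_⟩
  · exact ((by fun_prop : Continuous fun e => c - e + e * y).tendsto' 0 c (by ring)).mono_left
      nhdsWithin_le_nhds
  · filter_upwards [self_mem_nhdsWithin] with e he
    have : e * y < e := mul_lt_of_lt_one_right he hy.2
    simp only [mem_Iio]
    linarith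

lemma tendsto_smoothStep {a : ℝ} {c : ℝ → ℝ} (hc : ∀ e, 0 < e → c e ∈ Icc (a - e) a)
    (hx : x ≠ a) :
    Tendsto (fun e => smoothStep (c e) e x) (𝓝[>] 0) (𝓝 ((Ioi a).indicator 1 x)) := by
  refine tendsto_const_nhds.congr' ?_
  rcases hx.lt_or_gt with h | h
  · filter_upwards [Ioo_mem_nhdsGT (sub_pos.2 h)] with e he
    rw [indicator_of_notMem (notMem_Ioi.2 h.le),
      smoothStep_eq_zero he.1 (by linarith [(hc e he.1).1, he.2])]
  · filter_upwards [Ioo_mem_nhdsGT (sub_pos.2 h)] with e he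
    rw [indicator_of_mem (mem_Ioi.2 h), Pi.one_apply,
      smoothStep_eq_one he.1 (by linarith [(hc e he.1).2, he.2])]

end SmoothStep

/-- A smooth approximation of the indicator function of `[c, d]`, with slopes of width `e`. -/
def plateau (c d e x : ℝ) : ℝ := smoothStep c e x - smoothStep d e x

section Plateau

variable {c d e x : ℝ}

lemma contDiff_plateau (c d e : ℝ) : ContDiff ℝ 1 (plateau c d e) :=
  (contDiff_smoothStep c e).sub (contDiff_smoothStep d e)

lemma plateau_nonneg (he : 0 < e) (hcd : c ≤ d) : 0 ≤ plateau c d e x :=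
  sub_nonneg.2 (Real.smoothTransition.monotone (by gcongr))

lemma plateau_le_one : plateau c d e x ≤ 1 :=
  (sub_le_self _ (Real.smoothTransition.nonneg _)).trans (Real.smoothTransition.le_one _)

lemma plateau_eq_zero (he : 0 < e) (hcd : c ≤ d) (hx : x ∉ Ioo c (d + e)) :
    plateau c d e x = 0 := by
  rcases le_or_gt x c with h | h
  · rw [plateau, smoothStep_eq_zero he h, smoothStep_eq_zero he (h.trans hcd), sub_zero]
  · have hd : d + e ≤ x := not_lt.1 fun h' => hx ⟨h, h'⟩
    rw [plateau, smoothStep_eq_one he hd, smoothStep_eq_one he (by linarith), sub_self]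

lemma hasCompactSupport_plateau (he : 0 < e) (hcd : c ≤ d) :
    HasCompactSupport (plateau c d e) :=
  HasCompactSupport.intro isCompact_Icc fun _ hx =>
    plateau_eq_zero he hcd fun h => hx (Ioo_subset_Icc_self h)

lemma integrable_deriv_smoothStep (he : 0 < e) : Integrable (deriv (smoothStep c e)) := by
  have hS := (integrable_deriv_smoothTransition.comp_div he.ne').comp_sub_right c
  exact (hS.div_const e).congr (Eventually.of_forall fun x => (deriv_smoothStep c e x).symm)

lemma integral_deriv_plateau_mul (he : 0 < e) {h : ℝ → ℝ} (hh : BddMeasurable h) :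
    ∫ x, deriv (plateau c d e) x * h x =
      (∫ x, deriv (smoothStep c e) x * h x) - ∫ x, deriv (smoothStep d e) x * h x := by
  rw [← integral_sub (hh.integrable_mul (integrable_deriv_smoothStep he))
    (hh.integrable_mul (integrable_deriv_smoothStep he))]
  refine integral_congr_ae (Eventually.of_forall fun x => ?_)
  have hdiff : ∀ c, DifferentiableAt ℝ (smoothStep c e) x := fun c =>
    (contDiff_smoothStep c e).differentiable one_ne_zero x
  exact (congrArg (· * h x) (deriv_fun_sub (hdiff c) (hdiff d))).trans (sub_mul _ _ _)

lemma norm_plateau_mul_le {a b M : ℝ} (hab : a ≤ b) (he : e ∈ Ioo (0 : ℝ) 1)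
    (hc : c ∈ Icc (a - e) a) {h : ℝ → ℝ} (hM : ∀ x, |h x| ≤ M) :
    ‖plateau c b e x * h x‖ ≤ (Icc (a - 1) (b + 1)).indicator 1 x * M := by
  have hcb := hc.2.trans hab
  rw [norm_mul, Real.norm_of_nonneg (plateau_nonneg he.1 hcb)]
  by_cases hx : x ∈ Icc (a - 1) (b + 1)
  · rw [indicator_of_mem hx]
    exact mul_le_mul plateau_le_one (hM x) (abs_nonneg _) zero_le_one
  · rw [indicator_of_notMem hx, plateau_eq_zero he.1 hcb, zero_mul, zero_mul]
    exact fun h => hx ⟨by linarith [h.1, hc.1, he.2], by linarith [h.2, he.2]⟩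

lemma integrable_indicator_Icc_one (a b : ℝ) :
    Integrable ((Icc a b).indicator (1 : ℝ → ℝ)) :=
  (integrable_indicator_iff measurableSet_Icc).2 (integrableOn_const measure_Icc_lt_top.ne)

lemma abs_integral_plateau_mul_le {a b M : ℝ} (hab : a ≤ b) (he : e ∈ Ioo (0 : ℝ) 1)
    (hc : c ∈ Icc (a - e) a) {h : ℝ → ℝ} (hM : ∀ x, |h x| ≤ M) :
    |∫ x, plateau c b e x * h x| ≤ (b - a + 2) * M := by
  refine (norm_integral_le_of_norm_le ((integrable_indicator_Icc_one _ _).mul_const M)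
    (Eventually.of_forall fun x => norm_plateau_mul_le hab he hc hM)).trans_eq ?_
  rw [integral_mul_const, integral_indicator_one measurableSet_Icc,
    Real.volume_real_Icc_of_le (by linarith)]
  ring

lemma tendsto_integral_plateau_mul {a b : ℝ} (hab : a ≤ b) {c : ℝ → ℝ}
    (hc : ∀ e, 0 < e → c e ∈ Icc (a - e) a) {h : ℝ → ℝ} (hh : BddMeasurable h) :
    Tendsto (fun e => ∫ x, plateau (c e) b e x * h x) (𝓝[>] 0) (𝓝 (∫ x in a..b, h x)) := by
  obtain ⟨hm, M, hM⟩ := hh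
  have hlim : ∫ x in a..b, h x = ∫ x, ((Ioi a).indicator 1 x - (Ioi b).indicator 1 x) * h x := by
    rw [intervalIntegral.integral_of_le hab, ← integral_indicator measurableSet_Ioc]
    refine integral_congr_ae (Eventually.of_forall fun x => ?_)
    rcases le_or_gt x b with hb | hb
    · simp [indicator, hb, hb.not_gt]
    · simp [indicator, hb, hb.not_ge, hab.trans_lt hb]
  rw [hlim]
  refine tendsto_integral_filter_of_dominated_convergence
    (fun x => (Icc (a - 1) (b + 1)).indicator 1 x * M) (Eventually.of_forall fun e => ?_) ?_
    ((integrable_indicator_Icc_one _ _).mul_const M) ?_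
  · exact ((contDiff_plateau _ _ _).continuous.measurable.mul hm).aestronglyMeasurable
  · filter_upwards [Ioo_mem_nhdsGT zero_lt_one] with e he
    exact Eventually.of_forall fun x => norm_plateau_mul_le hab he (hc e he.1) hM
  · filter_upwards [compl_mem_ae_iff.2 (measure_singleton a),
      compl_mem_ae_iff.2 (measure_singleton b)] with x ha hb
    exact ((tendsto_smoothStep hc ha).sub
      (tendsto_smoothStep (fun e he => ⟨by linarith, le_rfl⟩) hb)).mul_const _

end Plateau

/-! ### Dissipation inequalities on rectangles -/

/-- `p_t + q_x ≤ 0` in the sense of distributions on `ℝ × (0, ∞)`. -/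
def WeaklyDissipative (p q : ℝ → ℝ → ℝ) : Prop :=
  ∀ φ : ℝ → ℝ → ℝ,
    ContDiff ℝ 1 (fun z : ℝ × ℝ => φ z.1 z.2) →
    HasCompactSupport (fun z : ℝ × ℝ => φ z.1 z.2) →
    (∀ x t, 0 ≤ φ x t) →
    (∀ x t, t ≤ 0 → φ x t = 0) →
    0 ≤ ∫ z : ℝ × ℝ, (p z.1 z.2 * deriv (fun s => φ z.1 s) z.2 +
      q z.1 z.2 * deriv (fun y => φ y z.2) z.1)

/-- An admissible nonnegative test function of time for inequalities on `(0, ∞)`. -/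
structure IsTimeCutoff (β : ℝ → ℝ) : Prop where
  contDiff : ContDiff ℝ 1 β
  hasCompactSupport : HasCompactSupport β
  nonneg : ∀ t, 0 ≤ β t
  eq_zero : ∀ t ≤ 0, β t = 0

namespace IsTimeCutoff

variable {β : ℝ → ℝ}

lemma integrable (hβ : IsTimeCutoff β) : Integrable β :=
  hβ.contDiff.continuous.integrable_of_hasCompactSupport hβ.hasCompactSupport

lemma integrable_deriv (hβ : IsTimeCutoff β) : Integrable (deriv β) :=
  (hβ.contDiff.continuous_deriv le_rfl).integrable_of_hasCompactSupport hβ.hasCompactSupport.deriv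

lemma deriv_eq_zero (hβ : IsTimeCutoff β) {t : ℝ} (ht : t ≤ 0) : deriv β t = 0 :=
  IsLocalMin.deriv_eq_zero <| Eventually.of_forall fun r => (hβ.eq_zero t ht).trans_le (hβ.nonneg r)

end IsTimeCutoff

lemma isTimeCutoff_plateau {s t e : ℝ} (hs : 0 < s) (hst : s ≤ t) (he : 0 < e) :
    IsTimeCutoff (plateau s t e) where
  contDiff := contDiff_plateau s t e
  hasCompactSupport := hasCompactSupport_plateau he hst
  nonneg _ := plateau_nonneg he hst
  eq_zero _ hr := plateau_eq_zero he hst fun h => hr.not_gt (hs.trans h.1)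

lemma BddMeasurable.setIntegral {p : ℝ → ℝ → ℝ} (hp : BddMeasurable (Function.uncurry p))
    (a b : ℝ) : BddMeasurable fun t => ∫ x in a..b, p x t := by
  obtain ⟨hm, M, hM⟩ := hp
  refine ⟨?_, M * |b - a|, fun t => ?_⟩
  swap
  · exact (Real.norm_eq_abs _).symm.trans_le
      (intervalIntegral.norm_integral_le_of_norm_le_const fun x _ => hM (x, t))
  exact (hm.stronglyMeasurable.integral_prod_left (μ := volume.restrict (Ioc a b))).measurable.sub
    (hm.stronglyMeasurable.integral_prod_left (μ := volume.restrict (Ioc b a))).measurable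

lemma BddMeasurable.aestronglyMeasurable_integral_mul {p : ℝ → ℝ → ℝ}
    (hp : BddMeasurable (Function.uncurry p)) {φ : ℝ → ℝ} (hφ : Continuous φ) :
    AEStronglyMeasurable fun t => ∫ x, φ x * p x t := by
  have hm : Measurable (Function.uncurry fun x t => φ x * p x t) :=
    (hφ.measurable.comp measurable_fst).mul hp.1
  exact hm.stronglyMeasurable.integral_prod_left.aestronglyMeasurable

lemma tendsto_integral_mul_of_bounded {β : ℝ → ℝ} (hβ : Integrable β) {G : ℝ → ℝ → ℝ} {C : ℝ}
    {g : ℝ → ℝ} (hm : ∀ e, AEStronglyMeasurable (G e)) (hC : ∀ᶠ e in 𝓝[>] 0, ∀ t, |G e t| ≤ C)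
    (hlim : ∀ t, β t ≠ 0 → Tendsto (fun e => G e t) (𝓝[>] 0) (𝓝 (g t))) :
    Tendsto (fun e => ∫ t, β t * G e t) (𝓝[>] 0) (𝓝 (∫ t, β t * g t)) := by
  refine tendsto_integral_filter_of_dominated_convergence (fun t => ‖β t‖ * C)
    (Eventually.of_forall fun e => hβ.1.mul (hm e)) ?_ (hβ.norm.mul_const C)
    (Eventually.of_forall fun t => ?_)
  · filter_upwards [hC] with e he
    refine Eventually.of_forall fun t => ?_
    rw [norm_mul]
    exact mul_le_mul_of_nonneg_left (he t) (norm_nonneg _)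
  · rcases eq_or_ne (β t) 0 with h0 | h0
    · simp only [h0, zero_mul, tendsto_const_nhds]
    · exact (hlim t h0).const_mul _

section WeaklyDissipative

variable {p q : ℝ → ℝ → ℝ}

lemma WeaklyDissipative.tensor (h : WeaklyDissipative p q)
    (hp : BddMeasurable (Function.uncurry p)) (hq : BddMeasurable (Function.uncurry q))
    {α β : ℝ → ℝ} (hα : ContDiff ℝ 1 α) (hαc : HasCompactSupport α) (hα0 : ∀ x, 0 ≤ α x)
    (hβ : IsTimeCutoff β) :
    0 ≤ (∫ t, deriv β t * ∫ x, α x * p x t) + ∫ t, β t * ∫ x, deriv α x * q x t := by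
  have hαi : Integrable α := hα.continuous.integrable_of_hasCompactSupport hαc
  have hαi' : Integrable (deriv α) :=
    (hα.continuous_deriv le_rfl).integrable_of_hasCompactSupport hαc.deriv
  have hpi : Integrable (fun z : ℝ × ℝ => α z.1 * deriv β z.2 * p z.1 z.2)
      (volume.prod volume) := hp.integrable_mul (hαi.mul_prod hβ.integrable_deriv)
  have hqi : Integrable (fun z : ℝ × ℝ => deriv α z.1 * β z.2 * q z.1 z.2)
      (volume.prod volume) := hq.integrable_mul (hαi'.mul_prod hβ.integrable)
  have hfubini : ∀ {v w : ℝ → ℝ} {g : ℝ → ℝ → ℝ},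
      Integrable (fun z : ℝ × ℝ => v z.1 * w z.2 * g z.1 z.2) (volume.prod volume) →
      ∫ z : ℝ × ℝ, v z.1 * w z.2 * g z.1 z.2 = ∫ t, w t * ∫ x, v x * g x t := fun hi => by
    rw [Measure.volume_eq_prod]
    refine (integral_prod_symm _ hi).trans ?_
    simp only [← integral_const_mul]
    congr! 4
    ring
  rw [← hfubini hpi, ← hfubini hqi, Measure.volume_eq_prod, ← integral_add hpi hqi]
  refine (h (fun x t => α x * β t) ((hα.comp contDiff_fst).mul (hβ.contDiff.comp contDiff_snd))
    (HasCompactSupport.intro (hαc.isCompact.prod hβ.hasCompactSupport.isCompact) fun z hz => ?_)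
    (fun x t => mul_nonneg (hα0 x) (hβ.nonneg t))
    (fun x t ht => by rw [hβ.eq_zero t ht, mul_zero])).trans_eq ?_
  · by_contra h0
    exact hz ⟨subset_tsupport _ (left_ne_zero_of_mul h0),
      subset_tsupport _ (right_ne_zero_of_mul h0)⟩
  congr! 2
  rw [deriv_const_mul_field, deriv_mul_const_field]
  ring

lemma WeaklyDissipative.integral_le (h : WeaklyDissipative p q)
    (hp : BddMeasurable (Function.uncurry p)) (hq : BddMeasurable (Function.uncurry q))
    {a b : ℝ} (hab : a ≤ b) {qa qb : ℝ → ℝ}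
    (ha : ∀ t, 0 < t → Tendsto (fun x => q x t) (𝓝[<] a) (𝓝 (qa t)))
    (hb : ∀ t, 0 < t → Tendsto (fun x => q x t) (𝓝[>] b) (𝓝 (qb t)))
    {β : ℝ → ℝ} (hβ : IsTimeCutoff β) :
    0 ≤ (∫ t, deriv β t * ∫ x in a..b, p x t) + ∫ t, β t * (qa t - qb t) := by
  have hc : ∀ e, 0 < e → a - e ∈ Icc (a - e) a := fun e he => ⟨le_rfl, by linarith⟩
  have hslice : ∀ {g : ℝ → ℝ → ℝ}, BddMeasurable (Function.uncurry g) →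
      ∀ t, BddMeasurable fun x => g x t := fun hg t => hg.comp measurable_prodMk_right
  have hdens : Tendsto (fun e => ∫ t, deriv β t * ∫ x, plateau (a - e) b e x * p x t) (𝓝[>] 0)
      (𝓝 (∫ t, deriv β t * ∫ x in a..b, p x t)) := by
    obtain ⟨M, hM⟩ := hp.2
    refine tendsto_integral_mul_of_bounded hβ.integrable_deriv (C := (b - a + 2) * M)
      (fun e => hp.aestronglyMeasurable_integral_mul (contDiff_plateau _ _ _).continuous) ?_
      fun t _ => tendsto_integral_plateau_mul hab hc (hslice hp t)
    filter_upwards [Ioo_mem_nhdsGT zero_lt_one] with e he t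
    exact abs_integral_plateau_mul_le hab he (hc e he.1) fun x => hM (x, t)
  have hflux : Tendsto (fun e => ∫ t, β t * ∫ x, deriv (plateau (a - e) b e) x * q x t) (𝓝[>] 0)
      (𝓝 (∫ t, β t * (qa t - qb t))) := by
    obtain ⟨M, hM⟩ := hq.2
    refine tendsto_integral_mul_of_bounded hβ.integrable (C := M + M) (fun e =>
      hq.aestronglyMeasurable_integral_mul ((contDiff_plateau _ _ _).continuous_deriv le_rfl)) ?_
      fun t ht => ?_
    · filter_upwards [self_mem_nhdsWithin] with e he t
      rw [integral_deriv_plateau_mul he (hslice hq t)]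
      exact (abs_sub _ _).trans (add_le_add
        (abs_integral_deriv_smoothStep_mul_le he fun x => hM (x, t))
        (abs_integral_deriv_smoothStep_mul_le he fun x => hM (x, t)))
    · have h0 : 0 < t := not_le.1 fun h0 => ht (hβ.eq_zero t h0)
      refine ((tendsto_integral_deriv_smoothStep_mul_left (hslice hq t) (ha t h0)).sub
        (tendsto_integral_deriv_smoothStep_mul_right (hslice hq t) (hb t h0))).congr' ?_
      filter_upwards [self_mem_nhdsWithin] with e he
      exact (integral_deriv_plateau_mul he (hslice hq t)).symm
  refine ge_of_tendsto (hdens.add hflux) ?_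
  filter_upwards [self_mem_nhdsWithin] with e he
  have he : 0 < e := he
  have hle : a - e ≤ b := by linarith
  exact h.tensor hp hq (contDiff_plateau _ _ _) (hasCompactSupport_plateau he hle)
    (fun x => plateau_nonneg he hle) hβ

lemma sub_le_integral_of_weak {P Q : ℝ → ℝ} (hP : BddMeasurable P) (hQ : BddMeasurable Q)
    (hPr : ∀ t, 0 < t → ContinuousWithinAt P (Ioi t) t)
    (h : ∀ β, IsTimeCutoff β → 0 ≤ (∫ t, deriv β t * P t) + ∫ t, β t * Q t)
    {s t : ℝ} (hs : 0 < s) (hst : s ≤ t) : P t - P s ≤ ∫ τ in s..t, Q τ := by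
  have hP' : Tendsto (fun e => ∫ r, deriv (plateau s t e) r * P r) (𝓝[>] 0) (𝓝 (P s - P t)) := by
    refine ((tendsto_integral_deriv_smoothStep_mul_right hP (hPr s hs)).sub
      (tendsto_integral_deriv_smoothStep_mul_right hP (hPr t (hs.trans_le hst)))).congr' ?_
    filter_upwards [self_mem_nhdsWithin] with e he
    exact (integral_deriv_plateau_mul he hP).symm
  have hQ' : Tendsto (fun e => ∫ r, plateau s t e r * Q r) (𝓝[>] 0) (𝓝 (∫ τ in s..t, Q τ)) :=
    tendsto_integral_plateau_mul hst (fun e he => ⟨by linarith, le_rfl⟩) hQ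
  have hnonneg : 0 ≤ P s - P t + ∫ τ in s..t, Q τ := by
    refine ge_of_tendsto (hP'.add hQ') ?_
    filter_upwards [self_mem_nhdsWithin] with e he
    exact h _ (isTimeCutoff_plateau hs hst he)
  linarith

lemma WeaklyDissipative.integral_sub_integral_le (h : WeaklyDissipative p q)
    (hp : BddMeasurable (Function.uncurry p)) (hq : BddMeasurable (Function.uncurry q))
    {a b : ℝ} (hab : a ≤ b) {qa qb : ℝ → ℝ} (hqa : BddMeasurable qa) (hqb : BddMeasurable qb)
    (ha : ∀ t, 0 < t → Tendsto (fun x => q x t) (𝓝[<] a) (𝓝 (qa t)))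
    (hb : ∀ t, 0 < t → Tendsto (fun x => q x t) (𝓝[>] b) (𝓝 (qb t)))
    (hcont : ∀ t, 0 < t → ContinuousWithinAt (fun t => ∫ x in a..b, p x t) (Ioi t) t)
    {s t : ℝ} (hs : 0 < s) (hst : s ≤ t) :
    (∫ x in a..b, p x t) - ∫ x in a..b, p x s ≤ ∫ τ in s..t, (qa τ - qb τ) :=
  sub_le_integral_of_weak (hp.setIntegral a b) (hqa.sub hqb) hcont
    (fun _ hβ => h.integral_le hp hq hab ha hb hβ) hs hst

lemma WeaklyDissipative.integral_sub_integral_eq (h : WeaklyDissipative p q)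
    (h' : WeaklyDissipative (fun x t => -p x t) (fun x t => -q x t))
    (hp : BddMeasurable (Function.uncurry p)) (hq : BddMeasurable (Function.uncurry q))
    {a b : ℝ} (hab : a ≤ b) {qa qb : ℝ → ℝ} (hqa : BddMeasurable qa) (hqb : BddMeasurable qb)
    (ha : ∀ t, 0 < t → Tendsto (fun x => q x t) (𝓝[<] a) (𝓝 (qa t)))
    (hb : ∀ t, 0 < t → Tendsto (fun x => q x t) (𝓝[>] b) (𝓝 (qb t)))
    (hcont : ∀ t, 0 < t → ContinuousWithinAt (fun t => ∫ x in a..b, p x t) (Ioi t) t)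
    {s t : ℝ} (hs : 0 < s) (hst : s ≤ t) :
    (∫ x in a..b, p x t) - ∫ x in a..b, p x s = ∫ τ in s..t, (qa τ - qb τ) := by
  refine le_antisymm (h.integral_sub_integral_le hp hq hab hqa hqb ha hb hcont hs hst) ?_
  have hneg := h'.integral_sub_integral_le hp.neg hq.neg hab hqa.neg hqb.neg
    (fun t ht => (ha t ht).neg) (fun t ht => (hb t ht).neg)
    (fun t ht => by simp only [intervalIntegral.integral_neg]; exact (hcont t ht).neg) hs hst
  simp only [← neg_sub', intervalIntegral.integral_neg] at hneg
  exact neg_le_neg_iff.1 hneg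

end WeaklyDissipative

/-! ### Potentials along Lipschitz curves -/

lemma ae_prod_of_ae_ae_swap {p : ℝ × ℝ → Prop} (hp : MeasurableSet {z | p z})
    (h : ∀ᵐ t, ∀ᵐ x, p (x, t)) : ∀ᵐ z ∂volume.prod volume, p z :=
  (Measure.measurePreserving_swap (μ := volume) (ν := volume)).quasiMeasurePreserving.ae
    ((Measure.ae_prod_iff_ae_ae (hp.preimage measurable_swap)).2 h)

lemma measurePreserving_shear {ζ : ℝ → ℝ} (hζ : Measurable ζ) :
    MeasurePreserving (fun z : ℝ × ℝ => (ζ z.2 + z.1, z.2))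
      (volume.prod volume) (volume.prod volume) :=
  Measure.measurePreserving_swap.comp <|
    ((MeasurePreserving.id volume).skew_product (g := fun t x => ζ t + x)
      ((hζ.comp measurable_fst).add measurable_snd)
      (Eventually.of_forall fun t => (measurePreserving_add_left volume (ζ t)).map_eq)).comp
    Measure.measurePreserving_swap

/-- `U` is a potential on `t > 0` of the conservation law `u_t + F_x = 0`, that is, `U_x = u` and
`U_t = -F`, in integrated form. -/
structure IsPotential (U u F : ℝ → ℝ → ℝ) : Prop where
  space : ∀ x y t, U y t - U x t = ∫ z in x..y, u z t
  time : ∀ x s t, 0 < s → s ≤ t → U x t - U x s = ∫ τ in s..t, -F x τ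

namespace IsPotential

variable {U u F : ℝ → ℝ → ℝ}

lemma exists_lipschitzOnWith (h : IsPotential U u F) (hu : BddMeasurable (Function.uncurry u))
    (hF : BddMeasurable (Function.uncurry F)) :
    ∃ L, LipschitzOnWith L (Function.uncurry U) {z | 0 < z.2} := by
  obtain ⟨⟨M, hM⟩, ⟨N, hN⟩⟩ := And.intro hu.2 hF.2
  have hMN : 0 ≤ M + N := add_nonneg ((abs_nonneg _).trans (hM 0)) ((abs_nonneg _).trans (hN 0))
  have hspace : ∀ x y t, |U y t - U x t| ≤ M * |y - x| := fun x y t => by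
    rw [h.space, ← Real.norm_eq_abs]
    exact intervalIntegral.norm_integral_le_of_norm_le_const fun z _ => hM (z, t)
  have htime : ∀ x s t, 0 < s → s ≤ t → |U x t - U x s| ≤ N * |t - s| := fun x s t hs hst => by
    rw [h.time x s t hs hst, ← Real.norm_eq_abs]
    exact intervalIntegral.norm_integral_le_of_norm_le_const fun τ _ =>
      (norm_neg _).trans_le (hN (x, τ))
  refine ⟨⟨M + N, hMN⟩, LipschitzOnWith.of_dist_le_mul ?_⟩
  rintro ⟨x, s⟩ hs ⟨y, t⟩ ht
  wlog hst : s ≤ t generalizing x s y t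
  · simpa only [dist_comm] using this y t ht x s hs (le_of_not_ge hst)
  calc |U x s - U y t|
      = |(U y t - U x t) + (U x t - U x s)| := by rw [sub_add_sub_cancel, abs_sub_comm]
    _ ≤ M * |y - x| + N * |t - s| :=
        (abs_add_le _ _).trans (add_le_add (hspace x y t) (htime x s t hs hst))
    _ ≤ M * dist (x, s) (y, t) + N * dist (x, s) (y, t) := by
        rw [abs_sub_comm y, abs_sub_comm t]
        exact add_le_add
          (mul_le_mul_of_nonneg_left (le_max_left _ _) ((abs_nonneg _).trans (hM 0)))
          (mul_le_mul_of_nonneg_left (le_max_right _ _) ((abs_nonneg _).trans (hN 0)))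
    _ = (M + N) * dist (x, s) (y, t) := (add_mul _ _ _).symm

lemma continuous_space (h : IsPotential U u F) (hu : BddMeasurable (Function.uncurry u))
    (t : ℝ) : Continuous fun x => U x t := by
  have hut : BddMeasurable fun x => u x t := hu.comp measurable_prodMk_right
  refine ((intervalIntegral.continuous_primitive hut.intervalIntegrable 0).add
    (continuous_const (y := U 0 t))).congr fun x => ?_
  change (∫ z in (0 : ℝ)..x, u z t) + U 0 t = U x t
  rw [← h.space, sub_add_cancel]

lemma ae_hasDerivAt_space (h : IsPotential U u F) (hu : BddMeasurable (Function.uncurry u))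
    (t : ℝ) : ∀ᵐ x, HasDerivAt (fun x => U x t) (u x t) x := by
  have hut : BddMeasurable fun x => u x t := hu.comp measurable_prodMk_right
  filter_upwards [_root_.LocallyIntegrable.ae_hasDerivAt_integral hut.locallyIntegrable] with x hx
  refine ((hx 0).add_const (U 0 t)).congr_of_eventuallyEq (Eventually.of_forall fun y => ?_)
  simp only [← h.space, sub_add_cancel]

lemma ae_hasDerivAt_time (h : IsPotential U u F) (hF : BddMeasurable (Function.uncurry F))
    (x : ℝ) : ∀ᵐ t, 0 < t → HasDerivAt (U x) (-F x t) t :=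
  ae_hasDerivAt_of_sub_eq_integral (hF.comp measurable_prodMk_left).neg (h.time x)

/-- Rademacher's theorem gives differentiability; the partial derivatives are known by Fubini. -/
lemma ae_hasFDerivAt (h : IsPotential U u F) (hu : BddMeasurable (Function.uncurry u))
    (hF : BddMeasurable (Function.uncurry F)) :
    ∀ᵐ z : ℝ × ℝ ∂volume.prod volume, 0 < z.2 →
      HasFDerivAt (Function.uncurry U) (u z.1 z.2 • ContinuousLinearMap.fst ℝ ℝ ℝ -
        F z.1 z.2 • ContinuousLinearMap.snd ℝ ℝ ℝ) z := by
  obtain ⟨L, hL⟩ := h.exists_lipschitzOnWith hu hF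
  have hopen : IsOpen {z : ℝ × ℝ | 0 < z.2} := isOpen_lt continuous_const continuous_snd
  have hdiff : ∀ᵐ z : ℝ × ℝ ∂volume.prod volume, 0 < z.2 →
      DifferentiableAt ℝ (Function.uncurry U) z := by
    filter_upwards [hL.ae_differentiableWithinAt_of_mem (μ := volume.prod volume)] with z hz h0
    exact (hz h0).differentiableAt (hopen.mem_nhds h0)
  let D := fderiv ℝ (Function.uncurry U)
  let E := {z | 0 < z.2 ∧ DifferentiableAt ℝ (Function.uncurry U) z}
  have hE : MeasurableSet E :=
    hopen.measurableSet.inter (measurableSet_of_differentiableAt ℝ (Function.uncurry U))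
  have hspace : ∀ᵐ z : ℝ × ℝ ∂volume.prod volume, z ∈ E → D z (1, 0) = u z.1 z.2 := by
    have hmeas : MeasurableSet {z : ℝ × ℝ | z ∈ E → D z (1, 0) = u z.1 z.2} := by
      exact hE.imp (measurableSet_eq_fun (measurable_fderiv_apply_const ℝ _ _) hu.1)
    refine ae_prod_of_ae_ae_swap hmeas (Eventually.of_forall fun t => ?_)
    filter_upwards [h.ae_hasDerivAt_space hu t] with x hx hxE
    have hcurve : HasDerivAt (fun x : ℝ => (x, t)) (1, 0) x :=
      (hasDerivAt_id x).prodMk (hasDerivAt_const x t)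
    exact (hxE.2.hasFDerivAt.comp_hasDerivAt (f := fun x => (x, t)) x hcurve).unique hx
  have htime : ∀ᵐ z : ℝ × ℝ ∂volume.prod volume, z ∈ E → D z (0, 1) = -F z.1 z.2 := by
    have hmeas : MeasurableSet {z : ℝ × ℝ | z ∈ E → D z (0, 1) = -F z.1 z.2} := by
      exact hE.imp (measurableSet_eq_fun (measurable_fderiv_apply_const ℝ _ _) hF.1.neg)
    refine (Measure.ae_prod_iff_ae_ae hmeas).2 (Eventually.of_forall fun x => ?_)
    filter_upwards [h.ae_hasDerivAt_time hF x] with t ht htE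
    have hcurve : HasDerivAt (fun t : ℝ => (x, t)) (0, 1) t :=
      (hasDerivAt_const t x).prodMk (hasDerivAt_id t)
    exact (htE.2.hasFDerivAt.comp_hasDerivAt t hcurve).unique (ht htE.1)
  filter_upwards [hdiff, hspace, htime] with z hz hzx hzt h0
  convert (hz h0).hasFDerivAt
  ext
  · simpa using (hzx ⟨h0, hz h0⟩).symm
  · simpa using (hzt ⟨h0, hz h0⟩).symm

/-- The curve itself may lie in the null set where `U` is not differentiable, but by Fubini's
theorem for the shear `(δ, t) ↦ (ζ t + δ, t)` almost every translate meets it in a null set. -/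
lemma ae_translate_sub_eq_integral (h : IsPotential U u F)
    (hu : BddMeasurable (Function.uncurry u)) (hF : BddMeasurable (Function.uncurry F))
    {ζ : ℝ → ℝ} {K : NNReal} (hζ : LipschitzWith K ζ) {s t : ℝ} (hs : 0 < s) (hst : s ≤ t) :
    ∀ᵐ δ : ℝ, U (ζ t + δ) t - U (ζ s + δ) s =
      ∫ τ in s..t, (deriv ζ τ * u (ζ τ + δ) τ - F (ζ τ + δ) τ) := by
  obtain ⟨L, hL⟩ := h.exists_lipschitzOnWith hu hF
  have hshear := (measurePreserving_shear hζ.continuous.measurable).quasiMeasurePreserving.ae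
    (h.ae_hasFDerivAt hu hF)
  filter_upwards [Measure.ae_ae_of_ae_prod hshear] with δ hδ
  have hpos : ∀ τ ∈ uIcc s t, 0 < τ := fun τ hτ =>
    hs.trans_le ((min_eq_left hst).symm.trans_le hτ.1)
  have hac : AbsolutelyContinuousOnInterval (fun τ => U (ζ τ + δ) τ) s t := by
    refine (hL.comp (f := fun τ => (ζ τ + δ, τ)) (K := max K 1) ?_ hpos
      ).absolutelyContinuousOnInterval
    exact ((hζ.add (LipschitzWith.const δ)).weaken (by simp)).prodMk LipschitzWith.id
      |>.lipschitzOnWith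
  rw [← hac.integral_deriv_eq_sub]
  refine intervalIntegral.integral_congr_ae ?_
  filter_upwards [hδ, hζ.ae_differentiableAt_real] with τ hUτ hζτ hτ
  have hcurve : HasDerivAt (fun τ => (ζ τ + δ, τ)) (deriv ζ τ, 1) τ :=
    (hζτ.hasDerivAt.add_const δ).prodMk (hasDerivAt_id τ)
  have hcomp := (hUτ (hpos τ (uIoc_subset_uIcc hτ))).comp_hasDerivAt
    (f := fun τ => (ζ τ + δ, τ)) τ hcurve
  refine hcomp.deriv.trans ?_
  simp [mul_comm]

/-- `U` need not be differentiable on the curve: the identity is the limit of the chain rules along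
the translates of the curve in `S`. -/
lemma sub_eq_integral_trace (h : IsPotential U u F)
    (hu : BddMeasurable (Function.uncurry u)) (hF : BddMeasurable (Function.uncurry F))
    {ζ : ℝ → ℝ} {K : NNReal} (hζ : LipschitzWith K ζ) {S : Set ℝ} (hS : IsOpen S)
    (hS0 : (0 : ℝ) ∈ closure S) {v w : ℝ → ℝ}
    (hv : ∀ τ, 0 < τ → Tendsto (fun δ => u (ζ τ + δ) τ) (𝓝[S] 0) (𝓝 (v τ)))
    (hw : ∀ τ, 0 < τ → Tendsto (fun δ => F (ζ τ + δ) τ) (𝓝[S] 0) (𝓝 (w τ)))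
    {s t : ℝ} (hs : 0 < s) (hst : s ≤ t) :
    U (ζ t) t - U (ζ s) s = ∫ τ in s..t, (deriv ζ τ * v τ - w τ) := by
  have hcurve : ∀ δ, Measurable fun τ => (ζ τ + δ, τ) := fun δ =>
    (hζ.continuous.measurable.add_const δ).prodMk measurable_id
  have hright : Tendsto (fun δ => ∫ τ in s..t, (deriv ζ τ * u (ζ τ + δ) τ - F (ζ τ + δ) τ))
      (𝓝[S] 0) (𝓝 (∫ τ in s..t, (deriv ζ τ * v τ - w τ))) := by
    obtain ⟨⟨M, hM⟩, ⟨N, hN⟩⟩ := And.intro hu.2 hF.2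
    refine intervalIntegral.tendsto_integral_filter_of_dominated_convergence (fun _ => K * M + N)
      (Eventually.of_forall fun δ => ?_) (Eventually.of_forall fun δ => Eventually.of_forall
        fun τ _ => ?_) intervalIntegrable_const (Eventually.of_forall fun τ hτ => ?_)
    · exact (((measurable_deriv ζ).mul (hu.1.comp (hcurve δ))).sub
        (hF.1.comp (hcurve δ))).aestronglyMeasurable
    · refine (norm_sub_le _ _).trans (add_le_add ?_ (hN (_, _)))
      exact (norm_mul _ _).trans_le (mul_le_mul (norm_deriv_le_of_lipschitz hζ) (hM (_, _))
        (norm_nonneg _) K.2)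
    · have h0 : 0 < τ := hs.trans ((min_eq_left hst).symm.trans_lt hτ.1)
      exact ((hv τ h0).const_mul _).sub (hw τ h0)
  have hleft : Tendsto (fun δ => U (ζ t + δ) t - U (ζ s + δ) s) (𝓝[S] 0)
      (𝓝 (U (ζ t) t - U (ζ s) s)) := by
    have hcont : ∀ r x, Tendsto (fun δ => U (x + δ) r) (𝓝[S] 0) (𝓝 (U x r)) := fun r x =>
      (((h.continuous_space hu r).comp (continuous_const_add x)).tendsto' 0 _
        (by simp)).mono_left nhdsWithin_le_nhds
    exact (hcont t (ζ t)).sub (hcont s (ζ s))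
  refine tendsto_nhds_unique_of_frequently_eq hleft hright ?_
  have hdense := Measure.dense_of_ae (h.ae_translate_sub_eq_integral hu hF hζ hs hst)
  have hmem := closure_minimal (hdense.open_subset_closure_inter hS) isClosed_closure hS0
  rw [frequently_nhdsWithin_iff]
  exact (mem_closure_iff_frequently.1 hmem).mono fun δ hδ => ⟨hδ.2, hδ.1⟩

end IsPotential

/-! ### Fluxes and traces of an AB-entropy solution -/

/-- The left limit at `x` of the discontinuous flux, `dflux fl fr x v` being the right limit. -/
def fluxLeft (fl fr : ℝ → ℝ) (x v : ℝ) : ℝ := if x ≤ 0 then fl v else fr v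

section DiscontinuousFlux

variable {fl fr : ℝ → ℝ} {g : ℝ → ℝ} {x v : ℝ}

lemma fluxLeft_zero : fluxLeft fl fr 0 v = fl v := if_pos le_rfl

lemma dflux_zero : dflux fl fr 0 v = fr v := if_neg (lt_irrefl 0)

lemma tendsto_dflux_left (hfl : Continuous fl) (hfr : Continuous fr)
    (hg : Tendsto g (𝓝[<] x) (𝓝 v)) :
    Tendsto (fun y => dflux fl fr y (g y)) (𝓝[<] x) (𝓝 (fluxLeft fl fr x v)) := by
  unfold fluxLeft
  split_ifs with hx
  · refine ((hfl.tendsto v).comp hg).congr' ?_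
    filter_upwards [self_mem_nhdsWithin] with y hy
    exact (if_pos (hy.trans_le hx)).symm
  · refine ((hfr.tendsto v).comp hg).congr' ?_
    filter_upwards [nhdsWithin_le_nhds (lt_mem_nhds (not_le.1 hx))] with y hy
    exact (if_neg hy.not_gt).symm

lemma tendsto_dflux_right (hfl : Continuous fl) (hfr : Continuous fr)
    (hg : Tendsto g (𝓝[>] x) (𝓝 v)) :
    Tendsto (fun y => dflux fl fr y (g y)) (𝓝[>] x) (𝓝 (dflux fl fr x v)) := by
  rcases lt_or_ge x 0 with hx | hx
  · rw [dflux, if_pos hx]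
    refine ((hfl.tendsto v).comp hg).congr' ?_
    filter_upwards [nhdsWithin_le_nhds (gt_mem_nhds hx)] with y hy
    exact (if_pos hy).symm
  · rw [dflux, if_neg hx.not_gt]
    refine ((hfr.tendsto v).comp hg).congr' ?_
    filter_upwards [self_mem_nhdsWithin] with y hy
    exact (if_neg (hx.trans_lt hy).not_gt).symm

variable {α : Type*} [MeasurableSpace α] {ξ w : α → ℝ}

lemma BddMeasurable.dflux (hfl : Continuous fl) (hfr : Continuous fr) (hξ : Measurable ξ)
    (hw : BddMeasurable w) : BddMeasurable fun a => dflux fl fr (ξ a) (w a) :=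
  ite (s := {a | ξ a < 0}) (measurableSet_lt hξ measurable_const) (hw.continuous_comp hfl)
    (hw.continuous_comp hfr)

lemma BddMeasurable.fluxLeft (hfl : Continuous fl) (hfr : Continuous fr) (hξ : Measurable ξ)
    (hw : BddMeasurable w) : BddMeasurable fun a => fluxLeft fl fr (ξ a) (w a) :=
  ite (s := {a | ξ a ≤ 0}) (measurableSet_le hξ measurable_const) (hw.continuous_comp hfl)
    (hw.continuous_comp hfr)

end DiscontinuousFlux

section Traces

lemma tendsto_const_add_nhdsLT (x : ℝ) : Tendsto (fun δ => x + δ) (𝓝[<] 0) (𝓝[<] x) := by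
  refine tendsto_nhdsWithin_iff.2 ⟨((continuous_const_add x).tendsto' 0 x (add_zero x)).mono_left
    nhdsWithin_le_nhds, ?_⟩
  filter_upwards [self_mem_nhdsWithin] with δ hδ using add_lt_of_neg_right x hδ

lemma tendsto_const_add_nhdsGT (x : ℝ) : Tendsto (fun δ => x + δ) (𝓝[>] 0) (𝓝[>] x) := by
  refine tendsto_nhdsWithin_iff.2 ⟨((continuous_const_add x).tendsto' 0 x (add_zero x)).mono_left
    nhdsWithin_le_nhds, ?_⟩
  filter_upwards [self_mem_nhdsWithin] with δ hδ using lt_add_of_pos_right x hδ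

lemma tendsto_trace_of_tendsto {g g' : ℝ → ℝ} {S : Set ℝ} (hS : IsOpen S) {x l : ℝ}
    (hg : ∀ y, Tendsto g (𝓝[>] y) (𝓝 (g' y))) (h : Tendsto g (𝓝[S] x) (𝓝 l)) :
    Tendsto g' (𝓝[S] x) (𝓝 l) := by
  rw [(closed_nhds_basis l).tendsto_right_iff]
  intro V hV
  filter_upwards [eventually_eventually_nhdsWithin.2 (h.eventually_mem hV.1), self_mem_nhdsWithin]
    with y hy hyS
  rw [hS.nhdsWithin_eq hyS] at hy
  exact hV.2.mem_of_tendsto (hg y) (hy.filter_mono nhdsWithin_le_nhds)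

lemma BddMeasurable.trace {u v : ℝ → ℝ → ℝ} (hu : BddMeasurable (Function.uncurry u))
    {l : Filter ℝ} [l.NeBot] [l.IsCountablyGenerated]
    (hv : ∀ x t, 0 < t → Tendsto (fun δ => u (x + δ) t) l (𝓝 (v x t))) :
    BddMeasurable (Function.uncurry fun x t => if 0 < t then v x t else 0) := by
  have hlim : ∀ z : ℝ × ℝ, Tendsto (fun δ => if 0 < z.2 then u (z.1 + δ) z.2 else 0) l
      (𝓝 (if 0 < z.2 then v z.1 z.2 else 0)) := fun z => by
    split_ifs with ht
    exacts [hv z.1 z.2 ht, tendsto_const_nhds]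
  have happrox : ∀ δ, BddMeasurable fun z : ℝ × ℝ => if 0 < z.2 then u (z.1 + δ) z.2 else 0 :=
    fun δ => .ite (s := {z : ℝ × ℝ | 0 < z.2}) (measurableSet_lt measurable_const measurable_snd)
      (hu.comp (by fun_prop : Measurable fun z : ℝ × ℝ => (z.1 + δ, z.2)))
      ⟨measurable_const, 0, fun _ => abs_zero.le⟩
  refine ⟨measurable_of_tendsto_metrizable' l (fun δ => (happrox δ).1) (tendsto_pi_nhds.2 hlim), ?_⟩
  obtain ⟨M, hM⟩ := hu.2
  refine ⟨M, fun z => le_of_tendsto (hlim z).abs (Eventually.of_forall fun δ => ?_)⟩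
  split_ifs
  exacts [hM (_, _), abs_zero.trans_le ((abs_nonneg _).trans (hM z))]

end Traces

section KruzkovFlux

/-- The Kružkov entropy flux paired with the entropy `v ↦ |v - k|`. -/
def kruzkovFlux (f : ℝ → ℝ) (k v : ℝ) : ℝ := Real.sign (v - k) * (f v - f k)

lemma kruzkovFlux_of_le {f : ℝ → ℝ} {k v : ℝ} (h : v ≤ k) : kruzkovFlux f k v = f k - f v := by
  rcases h.lt_or_eq with h | rfl
  · rw [kruzkovFlux, Real.sign_of_neg (sub_neg.2 h), neg_one_mul, neg_sub]
  · simp [kruzkovFlux]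

lemma kruzkovFlux_of_ge {f : ℝ → ℝ} {k v : ℝ} (h : k ≤ v) : kruzkovFlux f k v = f v - f k := by
  rcases h.lt_or_eq with h | rfl
  · rw [kruzkovFlux, Real.sign_of_pos (sub_pos.2 h), one_mul]
  · simp [kruzkovFlux]

lemma continuous_kruzkovFlux {f : ℝ → ℝ} (hf : Continuous f) (k : ℝ) :
    Continuous (kruzkovFlux f k) := by
  have h : kruzkovFlux f k = fun v => if v ≤ k then f k - f v else f v - f k := by
    ext v
    split_ifs with hv
    exacts [kruzkovFlux_of_le hv, kruzkovFlux_of_ge (not_le.1 hv).le]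
  rw [h]
  exact Continuous.if_le (continuous_const.sub hf) (hf.sub continuous_const) continuous_id
    continuous_const fun v hv => by rw [show v = k from hv]

end KruzkovFlux

namespace ABSol

variable {fl fr : ℝ → ℝ} {A B : ℝ} {u0 : ℝ → ℝ} (sol : ABSol fl fr A B u0)

/-- The left trace `u(x-, t)`, extended by `0` to `t ≤ 0`, where `um` is unconstrained. -/
def leftTrace (x t : ℝ) : ℝ := if 0 < t then sol.um x t else 0

/-- The right trace `u(x+, t)`, extended by `0` to `t ≤ 0`, where `up` is unconstrained. -/
def rightTrace (x t : ℝ) : ℝ := if 0 < t then sol.up x t else 0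

/-- The Lipschitz potential `U` of the solution, with `U_x = u` and `U_t = -f(x, u)`, normalised by
`U(0, 1) = 0`. -/
def potential (x t : ℝ) : ℝ :=
  (∫ y in (0 : ℝ)..x, sol.u y t) - ∫ τ in (1 : ℝ)..t, dflux fl fr 0 (sol.rightTrace 0 τ)

lemma bddMeasurable : BddMeasurable (Function.uncurry sol.u) :=
  ⟨sol.meas, sol.bdd.imp fun _ hM z => hM z.1 z.2⟩

lemma tendsto_leftTrace {x t : ℝ} (ht : 0 < t) :
    Tendsto (fun y => sol.u y t) (𝓝[<] x) (𝓝 (sol.leftTrace x t)) := by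
  rw [leftTrace, if_pos ht]
  exact sol.um_spec x t ht

lemma tendsto_rightTrace {x t : ℝ} (ht : 0 < t) :
    Tendsto (fun y => sol.u y t) (𝓝[>] x) (𝓝 (sol.rightTrace x t)) := by
  rw [rightTrace, if_pos ht]
  exact sol.up_spec x t ht

lemma bddMeasurable_leftTrace : BddMeasurable (Function.uncurry sol.leftTrace) :=
  sol.bddMeasurable.trace fun x t ht => (sol.um_spec x t ht).comp (tendsto_const_add_nhdsLT x)

lemma bddMeasurable_rightTrace : BddMeasurable (Function.uncurry sol.rightTrace) :=
  sol.bddMeasurable.trace fun x t ht => (sol.up_spec x t ht).comp (tendsto_const_add_nhdsGT x)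

lemma weaklyDissipative : WeaklyDissipative sol.u fun x t => dflux fl fr x (sol.u x t) :=
  fun φ hφ hφc _ hφ0 => (sol.weak φ hφ hφc hφ0).ge

lemma weaklyDissipative_neg :
    WeaklyDissipative (fun x t => -sol.u x t) fun x t => -dflux fl fr x (sol.u x t) := by
  intro φ hφ hφc _ hφ0
  simp only [neg_mul, ← neg_add, integral_neg, sol.weak φ hφ hφc hφ0, neg_zero, le_refl]

lemma weaklyDissipative_interfaceEntropy :
    WeaklyDissipative (fun x t => dflux (|· - A|) (|· - B|) x (sol.u x t))
      fun x t => dflux (kruzkovFlux fl A) (kruzkovFlux fr B) x (sol.u x t) := by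
  intro φ hφ hφc hφ0 hφt
  refine (sol.interfaceEntropy φ hφ hφc hφ0 hφt).trans_eq (integral_congr_ae ?_)
  have hne : ∀ᵐ z : ℝ × ℝ, z.1 ≠ 0 :=
    Measure.quasiMeasurePreserving_fst.ae (Measure.ae_ne volume 0)
  filter_upwards [hne] with z hz
  rcases hz.lt_or_gt with hz | hz
  · simp only [cAB, dflux, kruzkovFlux, if_pos hz, if_pos hz.le]
  · simp only [cAB, dflux, kruzkovFlux, if_neg hz.not_gt, if_neg hz.not_ge]

lemma continuousWithinAt_integral (a b : ℝ) {t : ℝ} (ht : 0 ≤ t) :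
    ContinuousWithinAt (fun t => ∫ x in a..b, sol.u x t) (Ici 0) t := by
  refine tendsto_iff_norm_sub_tendsto_zero.2 ?_
  refine squeeze_zero (fun _ => norm_nonneg _) (fun s => ?_) (sol.timeCont (max |a| |b|) t ht)
  have hslice : ∀ r, BddMeasurable fun x => sol.u x r := fun r =>
    sol.bddMeasurable.comp measurable_prodMk_right
  have hsub : uIoc a b ⊆ Icc (-max |a| |b|) (max |a| |b|) := uIoc_subset_uIcc.trans <|
    uIcc_subset_Icc (abs_le.1 (le_max_left _ _)) (abs_le.1 (le_max_right _ _))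
  rw [← intervalIntegral.integral_sub ((hslice s).intervalIntegrable _ _)
    ((hslice t).intervalIntegrable _ _)]
  refine (intervalIntegral.norm_integral_le_integral_norm_uIoc).trans ?_
  exact setIntegral_mono_set
    (((hslice s).sub (hslice t)).locallyIntegrable.integrableOn_isCompact isCompact_Icc).norm
    (Eventually.of_forall fun _ => norm_nonneg _) (Eventually.of_forall hsub)

lemma bddMeasurable_fluxLeft (hfl : Continuous fl) (hfr : Continuous fr) (x : ℝ) :
    BddMeasurable fun t => fluxLeft fl fr x (sol.leftTrace x t) :=
  (sol.bddMeasurable_leftTrace.comp measurable_prodMk_left).fluxLeft hfl hfr measurable_const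

lemma bddMeasurable_dflux (hfl : Continuous fl) (hfr : Continuous fr) (x : ℝ) :
    BddMeasurable fun t => dflux fl fr x (sol.rightTrace x t) :=
  (sol.bddMeasurable_rightTrace.comp measurable_prodMk_left).dflux hfl hfr measurable_const

lemma integral_sub_integral (hfl : Continuous fl) (hfr : Continuous fr) {a b : ℝ} (hab : a ≤ b)
    {s t : ℝ} (hs : 0 < s) (hst : s ≤ t) :
    (∫ x in a..b, sol.u x t) - ∫ x in a..b, sol.u x s =
      ∫ τ in s..t, (fluxLeft fl fr a (sol.leftTrace a τ) - dflux fl fr b (sol.rightTrace b τ)) :=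
  sol.weaklyDissipative.integral_sub_integral_eq sol.weaklyDissipative_neg sol.bddMeasurable
    (sol.bddMeasurable.dflux hfl hfr measurable_fst) hab
    (sol.bddMeasurable_fluxLeft hfl hfr a) (sol.bddMeasurable_dflux hfl hfr b)
    (fun _ ht => tendsto_dflux_left hfl hfr (sol.tendsto_leftTrace ht))
    (fun _ ht => tendsto_dflux_right hfl hfr (sol.tendsto_rightTrace ht))
    (fun _ ht => (sol.continuousWithinAt_integral a b ht.le).mono
      fun _ hr => ht.le.trans (le_of_lt hr)) hs hst

lemma integral_fluxLeft_sub_dflux (hfl : Continuous fl) (hfr : Continuous fr) (x : ℝ) {s t : ℝ}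
    (hs : 0 < s) (hst : s ≤ t) :
    ∫ τ in s..t, (fluxLeft fl fr x (sol.leftTrace x τ) - dflux fl fr x (sol.rightTrace x τ)) =
      0 := by
  simpa only [intervalIntegral.integral_same, sub_zero] using
    (sol.integral_sub_integral hfl hfr le_rfl hs hst).symm

lemma ae_fluxLeft_eq_dflux (hfl : Continuous fl) (hfr : Continuous fr) (x : ℝ) :
    ∀ᵐ t, 0 < t → fluxLeft fl fr x (sol.leftTrace x t) = dflux fl fr x (sol.rightTrace x t) := by
  have hbdd := (sol.bddMeasurable_fluxLeft hfl hfr x).sub (sol.bddMeasurable_dflux hfl hfr x)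
  filter_upwards [ae_hasDerivAt_of_sub_eq_integral (D := fun _ => 0) hbdd fun s t hs hst =>
    (sub_zero 0).trans (sol.integral_fluxLeft_sub_dflux hfl hfr x hs hst).symm] with t ht h0
  exact sub_eq_zero.1 ((ht h0).unique (hasDerivAt_const t 0))

lemma isPotential (hfl : Continuous fl) (hfr : Continuous fr) :
    IsPotential sol.potential sol.u fun x t => dflux fl fr x (sol.rightTrace x t) := by
  have hflux : ∀ x a b, IntervalIntegrable (fun τ => dflux fl fr x (sol.rightTrace x τ))
      volume a b := fun x => (sol.bddMeasurable_dflux hfl hfr x).intervalIntegrable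
  refine ⟨fun x y t => ?_, fun x s t hs hst => ?_⟩
  · have hu : BddMeasurable fun z => sol.u z t := sol.bddMeasurable.comp measurable_prodMk_right
    rw [potential, potential, sub_sub_sub_cancel_right, intervalIntegral.integral_interval_sub_left
      (hu.intervalIntegrable 0 y) (hu.intervalIntegrable 0 x)]
  · have hmass : ∀ a b, a ≤ b → (∫ y in a..b, sol.u y t) - ∫ y in a..b, sol.u y s =
        (∫ τ in s..t, dflux fl fr a (sol.rightTrace a τ)) -
          ∫ τ in s..t, dflux fl fr b (sol.rightTrace b τ) := fun a b hab => by
      have hbal := sol.integral_sub_integral hfl hfr hab hs hst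
      have hRH := sol.integral_fluxLeft_sub_dflux hfl hfr a hs hst
      have hleft := (sol.bddMeasurable_fluxLeft hfl hfr a).intervalIntegrable s t
      rw [intervalIntegral.integral_sub hleft (hflux _ s t)] at hbal hRH
      linarith
    have horigin := intervalIntegral.integral_interval_sub_left (hflux 0 1 t) (hflux 0 1 s)
    have hx : (∫ y in (0 : ℝ)..x, sol.u y t) - ∫ y in (0 : ℝ)..x, sol.u y s =
        (∫ τ in s..t, dflux fl fr 0 (sol.rightTrace 0 τ)) -
          ∫ τ in s..t, dflux fl fr x (sol.rightTrace x τ) := by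
      rcases le_total 0 x with hx | hx
      · exact hmass 0 x hx
      · rw [intervalIntegral.integral_symm x 0, intervalIntegral.integral_symm x 0]
        linarith [hmass x 0 hx]
    simp only [potential, intervalIntegral.integral_neg]
    linarith

lemma potential_sub_eq_integral_left (hfl : Continuous fl) (hfr : Continuous fr) {ζ : ℝ → ℝ}
    {K : NNReal} (hζ : LipschitzWith K ζ) {s t : ℝ} (hs : 0 < s) (hst : s ≤ t) :
    sol.potential (ζ t) t - sol.potential (ζ s) s = ∫ τ in s..t,
      (deriv ζ τ * sol.leftTrace (ζ τ) τ - fluxLeft fl fr (ζ τ) (sol.leftTrace (ζ τ) τ)) := by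
  refine (sol.isPotential hfl hfr).sub_eq_integral_trace sol.bddMeasurable
    (sol.bddMeasurable_rightTrace.dflux hfl hfr measurable_fst) hζ isOpen_Iio
    (by rw [closure_Iio, mem_Iic]) (fun τ hτ => ?_) (fun τ hτ => ?_) hs hst
  · exact (sol.tendsto_leftTrace hτ).comp (tendsto_const_add_nhdsLT _)
  · exact (tendsto_dflux_left hfl hfr (tendsto_trace_of_tendsto isOpen_Iio
      (fun _ => sol.tendsto_rightTrace hτ) (sol.tendsto_leftTrace hτ))).comp
      (tendsto_const_add_nhdsLT _)

lemma potential_sub_eq_integral_right (hfl : Continuous fl) (hfr : Continuous fr) {ζ : ℝ → ℝ}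
    {K : NNReal} (hζ : LipschitzWith K ζ) {s t : ℝ} (hs : 0 < s) (hst : s ≤ t) :
    sol.potential (ζ t) t - sol.potential (ζ s) s = ∫ τ in s..t,
      (deriv ζ τ * sol.rightTrace (ζ τ) τ - dflux fl fr (ζ τ) (sol.rightTrace (ζ τ) τ)) := by
  refine (sol.isPotential hfl hfr).sub_eq_integral_trace sol.bddMeasurable
    (sol.bddMeasurable_rightTrace.dflux hfl hfr measurable_fst) hζ isOpen_Ioi
    (by rw [closure_Ioi, mem_Ici]) (fun τ hτ => ?_) (fun τ hτ => ?_) hs hst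
  · exact (sol.tendsto_rightTrace hτ).comp (tendsto_const_add_nhdsGT _)
  · exact (tendsto_dflux_right hfl hfr (tendsto_trace_of_tendsto isOpen_Ioi
      (fun _ => sol.tendsto_rightTrace hτ) (sol.tendsto_rightTrace hτ))).comp
      (tendsto_const_add_nhdsGT _)

lemma ae_kruzkovFlux_le (hfl : Continuous fl) (hfr : Continuous fr) :
    ∀ᵐ t, 0 < t → kruzkovFlux fr B (sol.rightTrace 0 t) ≤ kruzkovFlux fl A (sol.leftTrace 0 t) := by
  have habs : ∀ k : ℝ, Continuous (|· - k|) := fun k => (continuous_sub_right k).abs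
  have hcl := continuous_kruzkovFlux hfl A
  have hcr := continuous_kruzkovFlux hfr B
  have hl : BddMeasurable fun t => kruzkovFlux fl A (sol.leftTrace 0 t) :=
    (sol.bddMeasurable_leftTrace.comp measurable_prodMk_left).continuous_comp hcl
  have hr : BddMeasurable fun t => kruzkovFlux fr B (sol.rightTrace 0 t) :=
    (sol.bddMeasurable_rightTrace.comp measurable_prodMk_left).continuous_comp hcr
  refine (ae_nonneg_of_integral_nonneg (hl.sub hr) fun s t hs hst => ?_).mono
    fun t ht h0 => sub_nonneg.1 (ht h0)
  simpa only [intervalIntegral.integral_same, sub_zero] using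
    sol.weaklyDissipative_interfaceEntropy.integral_sub_integral_le
      (sol.bddMeasurable.dflux (habs A) (habs B) measurable_fst)
      (sol.bddMeasurable.dflux hcl hcr measurable_fst) (le_refl 0) hl hr
      (fun _ ht => by
        simpa only [fluxLeft_zero] using
          tendsto_dflux_left hcl hcr (sol.tendsto_leftTrace (x := 0) ht))
      (fun _ ht => by
        simpa only [dflux_zero] using
          tendsto_dflux_right hcl hcr (sol.tendsto_rightTrace (x := 0) ht))
      (fun _ _ => by simpa only [intervalIntegral.integral_same] using continuousWithinAt_const)
      hs hst

/-- If the flux through the interface were below the connection value, then `u(0-, t) > A` and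
`u(0+, t) < B`, so that the Kružkov flux would increase across the interface. -/
lemma ae_connection_le (hfl : Continuous fl) (hfr : Continuous fr) (hAB : fl A = fr B)
    (hA : ∀ v ≤ A, fl A ≤ fl v) (hB : ∀ v ≥ B, fr B ≤ fr v) :
    ∀ᵐ t, 0 < t → fl A ≤ fl (sol.leftTrace 0 t) := by
  filter_upwards [sol.ae_kruzkovFlux_le hfl hfr,
    sol.ae_fluxLeft_eq_dflux hfl hfr 0] with t hent hRH h0
  have hRH : fl (sol.leftTrace 0 t) = fr (sol.rightTrace 0 t) := by
    simpa only [fluxLeft_zero, dflux_zero] using hRH h0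
  have hent := hent h0
  by_contra! hlt
  have hleft : A ≤ sol.leftTrace 0 t := le_of_not_ge fun h => hlt.not_ge (hA _ h)
  have hright : sol.rightTrace 0 t ≤ B := le_of_not_ge fun h => by linarith [hB _ h]
  rw [kruzkovFlux_of_le hright, kruzkovFlux_of_ge hleft] at hent
  linarith

end ABSol

/-! ### Calibrated curves -/

section RealFunctions

lemma convexOn_univ_of_contDiff_of_deriv2_nonneg {f : ℝ → ℝ} (hf : ContDiff ℝ 2 f)
    (hf2 : ∀ x, 0 ≤ deriv (deriv f) x) : ConvexOn ℝ univ f :=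
  convexOn_univ_of_deriv2_nonneg (hf.differentiable (by norm_num))
    (((contDiff_succ_iff_deriv (n := 1)).1 hf).2.2.differentiable (by norm_num)) hf2

lemma deriv_mul_sub_le_of_convexOn {f : ℝ → ℝ} (hc : ConvexOn ℝ univ f) (hd : Differentiable ℝ f)
    (v w : ℝ) : deriv f v * w - f w ≤ deriv f v * v - f v := by
  rcases lt_trichotomy v w with h | rfl | h
  · have hslope := hc.deriv_le_slope (mem_univ v) (mem_univ w) h (hd v)
    rw [slope_def_field, le_div_iff₀ (sub_pos.2 h)] at hslope
    linarith
  · exact le_rfl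
  · have hslope := hc.slope_le_deriv (mem_univ w) (mem_univ v) h (hd v)
    rw [slope_def_field, div_le_iff₀ (sub_pos.2 h)] at hslope
    linarith

lemma deriv_eq_of_forall_mul_sub_le {f : ℝ → ℝ} {d v : ℝ} (hf : DifferentiableAt ℝ f v)
    (h : ∀ w, d * w - f w ≤ d * v - f v) : deriv f v = d := by
  have hderiv : HasDerivAt (fun w => d * w - f w) (d * 1 - deriv f v) v :=
    ((hasDerivAt_id v).const_mul d).sub hf.hasDerivAt
  have hmax : IsLocalMax (fun w => d * w - f w) v := Eventually.of_forall h
  linarith [hmax.hasDerivAt_eq_zero hderiv]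

lemma exists_norm_deriv_le_of_convexOn {f : ℝ → ℝ} (hc : ConvexOn ℝ univ f)
    (hd : Differentiable ℝ f) (M : ℝ) : ∃ K : NNReal, ∀ v, |v| ≤ M → ‖deriv f v‖ ≤ K := by
  have hmono : Monotone (deriv f) := monotoneOn_univ.1 (hc.monotoneOn_deriv fun x _ => hd x)
  refine ⟨⟨max |deriv f (-M)| |deriv f M|, (abs_nonneg _).trans (le_max_left _ _)⟩, fun v hv => ?_⟩
  exact abs_le_max_abs_abs (hmono (abs_le.1 hv).1) (hmono (abs_le.1 hv).2)

/-- Only countably many zeros are isolated, and at any other zero the derivative vanishes. -/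
lemma ae_deriv_eq_zero_of_eq_zero (ζ : ℝ → ℝ) : ∀ᵐ t, ζ t = 0 → deriv ζ t = 0 := by
  have hisolated :=
    (countable_setOfPred_isolated_right_within (s := {t : ℝ | ζ t = 0})).ae_notMem volume
  filter_upwards [hisolated] with t ht h0
  by_contra hne
  refine ht ⟨h0, empty_mem_iff_bot.1 ?_⟩
  have hnonzero := (differentiableAt_of_deriv_ne_zero hne).hasDerivAt.eventually_ne (c := 0) hne
  filter_upwards [hnonzero.filter_mono (nhdsWithin_mono t fun z hz => ne_of_gt hz.2),
    self_mem_nhdsWithin] with z hz hz' using hz hz'.1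

lemma hasDerivAt_comp_zero_of_lipschitzWith {P Z : ℝ → ℝ} {C : NNReal} {t : ℝ}
    (hP : LipschitzWith C P) (hZ : HasDerivAt Z 0 t) : HasDerivAt (fun q => P (Z q)) 0 t := by
  rw [hasDerivAt_iff_isLittleO] at hZ ⊢
  refine (Asymptotics.IsBigO.of_bound C (Eventually.of_forall fun q => ?_)).trans_isLittleO hZ
  simpa only [smul_zero, sub_zero, dist_eq_norm] using hP.dist_le_mul (Z q) (Z t)

lemma bddMeasurable_deriv_of_lipschitzWith {Z : ℝ → ℝ} {K : NNReal} (hZ : LipschitzWith K Z) :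
    BddMeasurable (deriv Z) :=
  ⟨measurable_deriv Z, K, fun _ => norm_deriv_le_of_lipschitz hZ⟩

lemma lipschitzOnWith_of_ae_norm_deriv_le {ζ : ℝ → ℝ} {C K : NNReal} {a b : ℝ}
    (hζ : LipschitzOnWith C ζ (Icc a b)) (hK : ∀ᵐ t, t ∈ Ioo a b → ‖deriv ζ t‖ ≤ K) :
    LipschitzOnWith K ζ (Icc a b) := by
  refine LipschitzOnWith.of_dist_le_mul fun s hs t ht => ?_
  have hac : AbsolutelyContinuousOnInterval ζ t s :=
    (hζ.mono (uIcc_subset_Icc ht hs)).absolutelyContinuousOnInterval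
  rw [Real.dist_eq, Real.dist_eq, ← hac.integral_deriv_eq_sub, ← Real.norm_eq_abs]
  refine intervalIntegral.norm_integral_le_of_norm_le_const_ae ?_
  filter_upwards [hK, Measure.ae_ne volume b] with τ hτ hτb hmem
  exact hτ ⟨(le_min ht.1 hs.1).trans_lt hmem.1, (hmem.2.trans (max_le ht.2 hs.2)).lt_of_ne hτb⟩

end RealFunctions

section ConnectionPotential

variable {A B d t : ℝ} {Z : ℝ → ℝ}

/-- The primitive of the connection `c^{AB}` that vanishes at the interface. -/
def connectionPotential (A B x : ℝ) : ℝ := A * min x 0 + B * max x 0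

lemma exists_lipschitzWith_connectionPotential (A B : ℝ) :
    ∃ C, LipschitzWith C (connectionPotential A B) :=
  ⟨_, ((lipschitzWith_smul A).comp (LipschitzWith.id.min_const 0)).add
    ((lipschitzWith_smul B).comp (LipschitzWith.id.max_const 0))⟩

lemma hasDerivAt_connectionPotential_of_neg (h : Z t < 0) (hZ : HasDerivAt Z d t) :
    HasDerivAt (fun q => connectionPotential A B (Z q)) (A * d) t := by
  refine (hZ.const_mul A).congr_of_eventuallyEq ?_
  filter_upwards [hZ.continuousAt.eventually_lt_const h] with q hq
  simp only [connectionPotential, min_eq_left hq.le, max_eq_right hq.le, mul_zero, add_zero]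

lemma hasDerivAt_connectionPotential_of_pos (h : 0 < Z t) (hZ : HasDerivAt Z d t) :
    HasDerivAt (fun q => connectionPotential A B (Z q)) (B * d) t := by
  refine (hZ.const_mul B).congr_of_eventuallyEq ?_
  filter_upwards [hZ.continuousAt.eventually_const_lt h] with q hq
  simp only [connectionPotential, min_eq_right hq.le, max_eq_left hq.le, mul_zero, zero_add]

end ConnectionPotential

namespace ABSol

variable {fl fr : ℝ → ℝ} {A B : ℝ} {u0 : ℝ → ℝ} (sol : ABSol fl fr A B u0) {T : ℝ}
  {S : Set ℝ} {P Z : ℝ → ℝ} {c : ℝ} {K : NNReal}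

lemma bddMeasurable_leftRate (hfl : Continuous fl) (hfr : Continuous fr) (hZ : LipschitzWith K Z) :
    BddMeasurable fun τ =>
      deriv Z τ * sol.leftTrace (Z τ) τ - fluxLeft fl fr (Z τ) (sol.leftTrace (Z τ) τ) := by
  have hZm : Measurable Z := hZ.continuous.measurable
  have htrace : BddMeasurable fun τ => sol.leftTrace (Z τ) τ :=
    sol.bddMeasurable_leftTrace.comp (hZm.prodMk measurable_id)
  exact ((bddMeasurable_deriv_of_lipschitzWith hZ).mul htrace).sub (htrace.fluxLeft hfl hfr hZm)

lemma bddMeasurable_rightRate (hfl : Continuous fl) (hfr : Continuous fr)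
    (hZ : LipschitzWith K Z) : BddMeasurable fun τ =>
      deriv Z τ * sol.rightTrace (Z τ) τ - dflux fl fr (Z τ) (sol.rightTrace (Z τ) τ) := by
  have hZm : Measurable Z := hZ.continuous.measurable
  have htrace : BddMeasurable fun τ => sol.rightTrace (Z τ) τ :=
    sol.bddMeasurable_rightTrace.comp (hZm.prodMk measurable_id)
  exact ((bddMeasurable_deriv_of_lipschitzWith hZ).mul htrace).sub (htrace.dflux hfl hfr hZm)

/-- Along the curve `Z`, as long as it stays in `S` during the time interval `(0, T]`, the
potential of the solution grows at least as much as the reference potential `P x - c t`. -/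
def DominatesAlong (T : ℝ) (S : Set ℝ) (P : ℝ → ℝ) (c : ℝ) (Z : ℝ → ℝ) : Prop :=
  ∀ s t, 0 < s → s ≤ t → t ≤ T → MapsTo Z (Icc s t) S →
    P (Z t) - P (Z s) - c * (t - s) ≤ sol.potential (Z t) t - sol.potential (Z s) s

/-- The integrated form of being an AB-gic: on each side of the interface the potential dominates
those of the constant states, and everywhere that of the connection. -/
structure IsCalibrated (T : ℝ) (Z : ℝ → ℝ) : Prop where
  left : ∀ w, sol.DominatesAlong T (Iio 0) (w * ·) (fl w) Z
  right : ∀ w, sol.DominatesAlong T (Ioi 0) (w * ·) (fr w) Z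
  interface : sol.DominatesAlong T univ (connectionPotential A B) (fl A) Z

lemma dominatesAlong_of_ae (hfl : Continuous fl) (hfr : Continuous fr) (hZ : LipschitzWith K Z)
    {C : NNReal} (hP : LipschitzWith C P) (h : ∀ᵐ τ, τ ∈ Ioo 0 T → Z τ ∈ S →
      ∃ d, HasDerivAt (fun q => P (Z q)) d τ ∧ d - c ≤
        deriv Z τ * sol.leftTrace (Z τ) τ - fluxLeft fl fr (Z τ) (sol.leftTrace (Z τ) τ)) :
    sol.DominatesAlong T S P c Z := by
  intro s t hs hst htT hmaps
  have hPZ : LipschitzWith (C * K) fun τ => P (Z τ) := hP.comp hZ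
  have hderiv := (bddMeasurable_deriv_of_lipschitzWith hPZ).intervalIntegrable s t
  calc P (Z t) - P (Z s) - c * (t - s)
      = ∫ τ in s..t, (deriv (fun q => P (Z q)) τ - c) := by
        rw [intervalIntegral.integral_sub hderiv intervalIntegrable_const,
          (hPZ.lipschitzOnWith.absolutelyContinuousOnInterval).integral_deriv_eq_sub,
          intervalIntegral.integral_const, smul_eq_mul, mul_comm c]
    _ ≤ ∫ τ in s..t, (deriv Z τ * sol.leftTrace (Z τ) τ -
          fluxLeft fl fr (Z τ) (sol.leftTrace (Z τ) τ)) := by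
        refine intervalIntegral.integral_mono_ae_restrict hst
          (hderiv.sub intervalIntegrable_const)
          ((sol.bddMeasurable_leftRate hfl hfr hZ).intervalIntegrable s t) ?_
        rw [← restrict_Ioo_eq_restrict_Icc]
        filter_upwards [ae_restrict_of_ae h, ae_restrict_mem measurableSet_Ioo] with τ hτ hmem
        obtain ⟨d, hd, hle⟩ := hτ ⟨hs.trans hmem.1, hmem.2.trans_le htT⟩
          (hmaps (Ioo_subset_Icc_self hmem))
        rwa [hd.deriv]
    _ = sol.potential (Z t) t - sol.potential (Z s) s :=
        (sol.potential_sub_eq_integral_left hfl hfr hZ hs hst).symm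

variable {sol}

lemma DominatesAlong.deriv_sub_le (h : sol.DominatesAlong T S P c Z) (hS : IsOpen S)
    (hZ : Continuous Z) {t d I : ℝ} (ht : t ∈ Ioo 0 T) (hZt : Z t ∈ S)
    (hP : HasDerivAt (fun q => P (Z q)) d t)
    (hU : HasDerivAt (fun q => sol.potential (Z q) q) I t) : d - c ≤ I := by
  have hdiff : HasDerivAt (fun q => sol.potential (Z q) q - (P (Z q) - c * q)) (I - (d - c)) t :=
    (hU.sub (hP.sub ((hasDerivAt_id t).const_mul c))).congr_deriv (by rw [mul_one])
  refine sub_nonneg.1 (ge_of_tendsto hdiff.tendsto_slope_zero_right ?_)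
  have hmaps : ∀ᶠ q in 𝓝 t, Icc t q ⊆ Z ⁻¹' S :=
    (tendsto_const_nhds.Icc tendsto_id).eventually
      (eventually_smallSets_subset.2 (hZ.continuousAt.preimage_mem_nhds (hS.mem_nhds hZt)))
  have hshift : Tendsto (fun r => t + r) (𝓝[>] 0) (𝓝 t) :=
    (tendsto_const_add_nhdsGT t).mono_right nhdsWithin_le_nhds
  filter_upwards [self_mem_nhdsWithin, hshift.eventually hmaps,
    hshift.eventually (gt_mem_nhds ht.2)] with r hr hrS hrT
  have hr : 0 < r := hr
  refine smul_nonneg (inv_nonneg.2 hr.le) ?_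
  linarith [h t (t + r) ht.1 (by linarith) hrT.le hrS]

end ABSol

section Gic

variable {fl fr : ℝ → ℝ} {A B : ℝ} {u0 : ℝ → ℝ} {sol : ABSol fl fr A B u0} {T γ : ℝ}
  {ζ Z : ℝ → ℝ} {K : NNReal}

lemma ABSol.leftTrace_of_pos {x t : ℝ} (ht : 0 < t) : sol.leftTrace x t = sol.um x t := if_pos ht

lemma ABSol.rightTrace_of_pos {x t : ℝ} (ht : 0 < t) : sol.rightTrace x t = sol.up x t := if_pos ht

lemma IsABgic.congr (h : IsABgic T fl fr γ sol ζ) (hEq : EqOn ζ Z (Icc 0 T)) :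
    IsABgic T fl fr γ sol Z := by
  obtain ⟨⟨K, hK⟩, hae⟩ := h
  refine ⟨⟨K, fun s hs t ht => by simpa only [hEq hs, hEq ht] using hK hs ht⟩, ?_⟩
  rw [← restrict_Ioo_eq_restrict_Icc, ae_restrict_iff' measurableSet_Ioo] at hae ⊢
  filter_upwards [hae] with t ht htT
  have hev : ζ =ᶠ[𝓝 t] Z := eventuallyEq_of_mem (Icc_mem_nhds htT.1 htT.2) hEq
  simpa only [hev.eq_of_nhds, hev.hasDerivAt_iff] using ht htT

lemma IsABgic.ae_deriv_eq (h : IsABgic T fl fr γ sol ζ) : ∀ᵐ t, t ∈ Ioo 0 T →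
    (ζ t < 0 → deriv ζ t = deriv fl (sol.leftTrace (ζ t) t)) ∧
    (0 < ζ t → deriv ζ t = deriv fr (sol.leftTrace (ζ t) t)) ∧
    (ζ t = 0 → deriv ζ t = 0 ∧ fl (sol.leftTrace 0 t) = γ) := by
  have hae := h.2
  rw [← restrict_Ioo_eq_restrict_Icc, ae_restrict_iff' measurableSet_Ioo] at hae
  filter_upwards [hae, ae_deriv_eq_zero_of_eq_zero ζ] with t ht hzero htT
  obtain ⟨hneg, hpos, hinterface⟩ := ht htT
  simp only [ABSol.leftTrace_of_pos htT.1]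
  exact ⟨fun hlt => (hneg hlt).1.deriv, fun hlt => (hpos hlt).1.deriv,
    fun heq => ⟨hzero heq, (hinterface heq).1⟩⟩

lemma exists_lipschitzOnWith_of_isABgic (hcl : ConvexOn ℝ univ fl) (hcr : ConvexOn ℝ univ fr)
    (hdl : Differentiable ℝ fl) (hdr : Differentiable ℝ fr) (sol : ABSol fl fr A B u0) :
    ∃ K, ∀ T γ ζ, IsABgic T fl fr γ sol ζ → LipschitzOnWith K ζ (Icc 0 T) := by
  obtain ⟨-, M, hM⟩ := sol.bddMeasurable_leftTrace
  obtain ⟨Kl, hKl⟩ := exists_norm_deriv_le_of_convexOn hcl hdl M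
  obtain ⟨Kr, hKr⟩ := exists_norm_deriv_le_of_convexOn hcr hdr M
  refine ⟨max Kl Kr, fun T γ ζ h => ?_⟩
  obtain ⟨C, hC⟩ := h.1
  refine lipschitzOnWith_of_ae_norm_deriv_le hC ?_
  filter_upwards [h.ae_deriv_eq] with t ht htT
  obtain ⟨hneg, hpos, hinterface⟩ := ht htT
  rcases lt_trichotomy (ζ t) 0 with hlt | heq | hlt
  · rw [hneg hlt]
    exact (hKl _ (hM (ζ t, t))).trans (NNReal.coe_le_coe.2 (le_max_left _ _))
  · rw [(hinterface heq).1, norm_zero]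
    exact NNReal.coe_nonneg _
  · rw [hpos hlt]
    exact (hKr _ (hM (ζ t, t))).trans (NNReal.coe_le_coe.2 (le_max_right _ _))

theorem IsABgic.isCalibrated (hcl : ConvexOn ℝ univ fl) (hcr : ConvexOn ℝ univ fr)
    (hdl : Differentiable ℝ fl) (hdr : Differentiable ℝ fr) (hAB : fl A = fr B)
    (h : IsABgic T fl fr (fl A) sol Z) (hZ : LipschitzWith K Z) : sol.IsCalibrated T Z := by
  obtain ⟨C, hC⟩ := exists_lipschitzWith_connectionPotential A B
  have hfl := hdl.continuous
  have hfr := hdr.continuous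
  have hae := h.ae_deriv_eq.and hZ.ae_differentiableAt_real
  refine ⟨fun w => sol.dominatesAlong_of_ae hfl hfr hZ (lipschitzWith_smul w) ?_,
    fun w => sol.dominatesAlong_of_ae hfl hfr hZ (lipschitzWith_smul w) ?_,
    sol.dominatesAlong_of_ae hfl hfr hZ hC ?_⟩
  · filter_upwards [hae] with τ ⟨hτ, hd⟩ hτT (hlt : Z τ < 0)
    refine ⟨_, hd.hasDerivAt.const_mul w, ?_⟩
    rw [fluxLeft, if_pos hlt.le, (hτ hτT).1 hlt, mul_comm w]
    exact deriv_mul_sub_le_of_convexOn hcl hdl _ w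
  · filter_upwards [hae] with τ ⟨hτ, hd⟩ hτT (hlt : 0 < Z τ)
    refine ⟨_, hd.hasDerivAt.const_mul w, ?_⟩
    rw [fluxLeft, if_neg hlt.not_ge, (hτ hτT).2.1 hlt, mul_comm w]
    exact deriv_mul_sub_le_of_convexOn hcr hdr _ w
  · filter_upwards [hae] with τ ⟨hτ, hd⟩ hτT _
    obtain ⟨hneg, hpos, hinterface⟩ := hτ hτT
    rcases lt_trichotomy (Z τ) 0 with hlt | heq | hlt
    · refine ⟨_, hasDerivAt_connectionPotential_of_neg hlt hd.hasDerivAt, ?_⟩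
      rw [fluxLeft, if_pos hlt.le, hneg hlt, mul_comm A]
      exact deriv_mul_sub_le_of_convexOn hcl hdl _ A
    · obtain ⟨hderiv, hflux⟩ := hinterface heq
      refine ⟨0, hasDerivAt_comp_zero_of_lipschitzWith hC (hderiv ▸ hd.hasDerivAt), ?_⟩
      rw [heq, fluxLeft_zero, hderiv, hflux, zero_mul]
    · refine ⟨_, hasDerivAt_connectionPotential_of_pos hlt hd.hasDerivAt, ?_⟩
      rw [fluxLeft, if_neg hlt.not_ge, hpos hlt, hAB, mul_comm B]
      exact deriv_mul_sub_le_of_convexOn hcr hdr _ B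

lemma ABSol.ae_hasDerivAt_potential (hfl : Continuous fl) (hfr : Continuous fr)
    (hZ : LipschitzWith K Z) : ∀ᵐ t, 0 < t →
      HasDerivAt (fun q => sol.potential (Z q) q)
        (deriv Z t * sol.um (Z t) t - fluxLeft fl fr (Z t) (sol.um (Z t) t)) t ∧
      HasDerivAt (fun q => sol.potential (Z q) q)
        (deriv Z t * sol.up (Z t) t - dflux fl fr (Z t) (sol.up (Z t) t)) t := by
  filter_upwards [ae_hasDerivAt_of_sub_eq_integral (sol.bddMeasurable_leftRate hfl hfr hZ)
      fun s t => sol.potential_sub_eq_integral_left hfl hfr hZ,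
    ae_hasDerivAt_of_sub_eq_integral (sol.bddMeasurable_rightRate hfl hfr hZ)
      fun s t => sol.potential_sub_eq_integral_right hfl hfr hZ] with t hleft hright h0
  simpa only [leftTrace_of_pos h0, rightTrace_of_pos h0] using And.intro (hleft h0) (hright h0)

lemma ABSol.deriv_eq_of_dominatesAlong {f : ℝ → ℝ} (hf : Differentiable ℝ f) {S : Set ℝ}
    (h : ∀ w, sol.DominatesAlong T S (w * ·) (f w) Z) (hS : IsOpen S) (hZ : Continuous Z) {t v : ℝ}
    (ht : t ∈ Ioo 0 T) (hZt : Z t ∈ S) (hd : DifferentiableAt ℝ Z t)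
    (hU : HasDerivAt (fun q => sol.potential (Z q) q) (deriv Z t * v - f v) t) :
    deriv f v = deriv Z t :=
  deriv_eq_of_forall_mul_sub_le (hf v) fun w => mul_comm w (deriv Z t) ▸
    (h w).deriv_sub_le hS hZ ht hZt (hd.hasDerivAt.const_mul w) hU

theorem ABSol.IsCalibrated.isABgic (hdl : Differentiable ℝ fl) (hdr : Differentiable ℝ fr)
    (hAB : fl A = fr B) (hA : ∀ v ≤ A, fl A ≤ fl v) (hB : ∀ v ≥ B, fr B ≤ fr v)
    (h : sol.IsCalibrated T Z) (hZ : LipschitzWith K Z) : IsABgic T fl fr (fl A) sol Z := by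
  have hfl := hdl.continuous
  have hfr := hdr.continuous
  obtain ⟨C, hC⟩ := exists_lipschitzWith_connectionPotential A B
  refine ⟨⟨K, hZ.lipschitzOnWith⟩, ?_⟩
  rw [← restrict_Ioo_eq_restrict_Icc, ae_restrict_iff' measurableSet_Ioo]
  filter_upwards [sol.ae_hasDerivAt_potential hfl hfr hZ, hZ.ae_differentiableAt_real,
    ae_deriv_eq_zero_of_eq_zero Z, sol.ae_fluxLeft_eq_dflux hfl hfr 0,
    sol.ae_connection_le hfl hfr hAB hA hB] with t hU hd hzero hRH hentropy ht
  obtain ⟨hleft, hright⟩ := hU ht.1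
  refine ⟨fun hlt => ?_, fun hlt => ?_, fun heq => ?_⟩
  · rw [fluxLeft, if_pos hlt.le] at hleft
    rw [dflux, if_pos hlt] at hright
    rw [deriv_eq_of_dominatesAlong hdl h.left isOpen_Iio hZ.continuous ht hlt hd hleft,
      deriv_eq_of_dominatesAlong hdl h.left isOpen_Iio hZ.continuous ht hlt hd hright]
    exact ⟨hd.hasDerivAt, rfl⟩
  · rw [fluxLeft, if_neg hlt.not_ge] at hleft
    rw [dflux, if_neg hlt.not_gt] at hright
    rw [deriv_eq_of_dominatesAlong hdr h.right isOpen_Ioi hZ.continuous ht hlt hd hleft,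
      deriv_eq_of_dominatesAlong hdr h.right isOpen_Ioi hZ.continuous ht hlt hd hright]
    exact ⟨hd.hasDerivAt, rfl⟩
  · have hconnection := h.interface.deriv_sub_le isOpen_univ hZ.continuous ht (mem_univ _)
      (hasDerivAt_comp_zero_of_lipschitzWith hC (hzero heq ▸ hd.hasDerivAt)) hleft
    rw [heq, fluxLeft_zero, hzero heq, zero_mul] at hconnection
    have hRH := hRH ht.1
    have hentropy := hentropy ht.1
    rw [fluxLeft_zero, dflux_zero, leftTrace_of_pos ht.1, rightTrace_of_pos ht.1] at hRH
    rw [leftTrace_of_pos ht.1] at hentropy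
    exact ⟨by linarith, by linarith⟩

end Gic

/-! ### Compactness and the closed graph -/

section ClosedGraph

lemma isCompact_setOfPred_lipschitzWith {X Y : Type*} [PseudoMetricSpace X] [MetricSpace Y]
    [ProperSpace Y] (K : NNReal) (x₀ : X) {Q : Set Y} (hQ : IsCompact Q) :
    IsCompact {Z : C(X, Y) | LipschitzWith K Z ∧ Z x₀ ∈ Q} := by
  set F : Set C(X, Y) := {Z | LipschitzWith K Z ∧ Z x₀ ∈ Q}
  have hmem : ∀ Z ∈ F, ∀ x, Z x ∈ Metric.cthickening (K * dist x x₀) Q := fun Z hZ x =>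
    Metric.mem_cthickening_of_dist_le _ _ _ _ hZ.2 (hZ.1.dist_le_mul x x₀)
  have himage : DFunLike.coe '' F = {g : X → Y | LipschitzWith K g} ∩ {g | g x₀ ∈ Q} := by
    ext g
    exact ⟨by rintro ⟨Z, hZ, rfl⟩; exact hZ, fun hg => ⟨⟨g, hg.1.continuous⟩, hg, rfl⟩⟩
  have hclosed : IsClosed (DFunLike.coe '' F) := himage ▸
    (isClosed_setOfPred_lipschitzWith K).inter (hQ.isClosed.preimage (continuous_apply x₀))
  refine ArzelaAscoli.isCompact_of_equicontinuous F
    ((isCompact_univ_pi fun x => hQ.cthickening (r := K * dist x x₀)).of_isClosed_subset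
      hclosed ?_) ?_
  · rintro _ ⟨Z, hZ, rfl⟩ x -
    exact hmem Z hZ x
  · exact (LipschitzWith.uniformEquicontinuous _ K fun Z => Z.2.1).equicontinuous

variable {fl fr : ℝ → ℝ} {A B : ℝ} {u0 : ℝ → ℝ}

lemma ABSol.isClosed_setOfPred_dominatesAlong (hfl : Continuous fl) (hfr : Continuous fr)
    (sol : ABSol fl fr A B u0) (T : ℝ) {S : Set ℝ} (hS : IsOpen S) {P : ℝ → ℝ} (hP : Continuous P)
    (c : ℝ) : IsClosed {Z : C(ℝ, ℝ) | sol.DominatesAlong T S P c Z} := by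
  simp only [DominatesAlong, ofPred_forall]
  refine isClosed_iInter fun s => isClosed_iInter fun t => isClosed_iInter fun _ =>
    isClosed_iInter fun _ => isClosed_iInter fun _ =>
      isClosed_imp (ContinuousMap.isOpen_setOfPred_mapsTo isCompact_Icc hS) ?_
  have hU : ∀ r, Continuous fun Z : C(ℝ, ℝ) => sol.potential (Z r) r := fun r =>
    ((sol.isPotential hfl hfr).continuous_space sol.bddMeasurable r).comp
      (continuous_eval_const r)
  have hPZ : ∀ r, Continuous fun Z : C(ℝ, ℝ) => P (Z r) := fun r =>
    hP.comp (continuous_eval_const r)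
  exact isClosed_le (((hPZ t).sub (hPZ s)).sub continuous_const) ((hU t).sub (hU s))

lemma ABSol.isClosed_setOfPred_isCalibrated (hfl : Continuous fl) (hfr : Continuous fr)
    (sol : ABSol fl fr A B u0) (T : ℝ) : IsClosed {Z : C(ℝ, ℝ) | sol.IsCalibrated T Z} := by
  obtain ⟨C, hC⟩ := exists_lipschitzWith_connectionPotential A B
  have hset : {Z : C(ℝ, ℝ) | sol.IsCalibrated T Z} =
      (⋂ w, {Z : C(ℝ, ℝ) | sol.DominatesAlong T (Iio 0) (w * ·) (fl w) Z}) ∩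
      ((⋂ w, {Z : C(ℝ, ℝ) | sol.DominatesAlong T (Ioi 0) (w * ·) (fr w) Z}) ∩
      {Z : C(ℝ, ℝ) | sol.DominatesAlong T univ (connectionPotential A B) (fl A) Z}) := by
    ext Z
    simp only [mem_inter_iff, mem_iInter]
    exact ⟨fun h => ⟨h.left, h.right, h.interface⟩, fun h => ⟨h.1, h.2.1, h.2.2⟩⟩
  have hclosed {S : Set ℝ} (hS : IsOpen S) {P : ℝ → ℝ} (hP : Continuous P) (c : ℝ) :=
    sol.isClosed_setOfPred_dominatesAlong hfl hfr T hS hP c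
  exact hset ▸ (isClosed_iInter fun w => hclosed isOpen_Iio (continuous_const_mul w) _).inter <|
    (isClosed_iInter fun w => hclosed isOpen_Ioi (continuous_const_mul w) _).inter <|
      hclosed isOpen_univ hC.continuous _

lemma exists_mem_charSet0_iff {T : ℝ} (hT : 0 ≤ T) (hcl : ConvexOn ℝ univ fl)
    (hcr : ConvexOn ℝ univ fr) (hdl : Differentiable ℝ fl) (hdr : Differentiable ℝ fr)
    (hAB : fl A = fr B) (hA' : deriv fl A ≤ 0) (hB' : 0 ≤ deriv fr B) (sol : ABSol fl fr A B u0) :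
    ∃ K, ∀ x y, y ∈ charSet0 T fl fr (fl A) sol x ↔
      ∃ Z : C(ℝ, ℝ), LipschitzWith K Z ∧ sol.IsCalibrated T Z ∧ Z T = x ∧ Z 0 = y := by
  obtain ⟨K, hK⟩ := exists_lipschitzOnWith_of_isABgic hcl hcr hdl hdr sol
  have hA : ∀ v ≤ A, fl A ≤ fl v := fun v hv => by
    nlinarith [deriv_mul_sub_le_of_convexOn hcl hdl A v]
  have hB : ∀ v ≥ B, fr B ≤ fr v := fun v hv => by
    nlinarith [deriv_mul_sub_le_of_convexOn hcr hdr B v]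
  refine ⟨K, fun x y => ⟨?_, ?_⟩⟩
  · rintro ⟨ζ, ⟨hζ, rfl⟩, rfl⟩
    obtain ⟨Z, hZ, hEq⟩ := (hK T _ ζ hζ).extend_real
    exact ⟨⟨Z, hZ.continuous⟩, hZ, (hζ.congr hEq).isCalibrated hcl hcr hdl hdr hAB hZ,
      (hEq (right_mem_Icc.2 hT)).symm, (hEq (left_mem_Icc.2 hT)).symm⟩
  · rintro ⟨Z, hZ, hcal, rfl, rfl⟩
    exact ⟨Z, ⟨hcal.isABgic hdl hdr hAB hA hB hZ, rfl⟩, rfl⟩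

theorem charSet0_closed_graph_general {T : ℝ} (hT : 0 ≤ T) (hcl : ConvexOn ℝ univ fl)
    (hcr : ConvexOn ℝ univ fr) (hdl : Differentiable ℝ fl) (hdr : Differentiable ℝ fr)
    (hAB : fl A = fr B) (hA' : deriv fl A ≤ 0) (hB' : 0 ≤ deriv fr B) (sol : ABSol fl fr A B u0) :
    IsClosed {z : ℝ × ℝ | z.2 ∈ charSet0 T fl fr (fl A) sol z.1} := by
  obtain ⟨K, hK⟩ := exists_mem_charSet0_iff hT hcl hcr hdl hdr hAB hA' hB' sol
  refine IsSeqClosed.isClosed fun z p hz hp => ?_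
  choose Z hLip hcal hT' h0 using fun n => (hK (z n).1 (z n).2).1 (hz n)
  have hcompact : IsCompact ({Z : C(ℝ, ℝ) | LipschitzWith K Z ∧ Z 0 ∈ Metric.closedBall p.2 1} ∩
      {Z | sol.IsCalibrated T Z}) :=
    (isCompact_setOfPred_lipschitzWith K 0 (isCompact_closedBall p.2 1)).inter_right
      (sol.isClosed_setOfPred_isCalibrated hdl.continuous hdr.continuous T)
  have hev : Continuous fun Z : C(ℝ, ℝ) => (Z T, Z 0) :=
    (continuous_eval_const T).prodMk (continuous_eval_const 0)
  have hball : ∀ᶠ n in atTop, (z n).2 ∈ Metric.closedBall p.2 1 :=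
    hp.snd_nhds.eventually (Metric.closedBall_mem_nhds p.2 one_pos)
  obtain ⟨W, ⟨⟨hW, -⟩, hWcal⟩, hWp⟩ := (hcompact.image hev).isClosed.mem_of_tendsto hp <|
    hball.mono fun n hn =>
      ⟨Z n, ⟨⟨hLip n, (h0 n).symm ▸ hn⟩, hcal n⟩, Prod.ext (hT' n) (h0 n)⟩
  exact (hK p.1 p.2).2 ⟨W, hW, hWcal, congrArg Prod.fst hWp, congrArg Prod.snd hWp⟩

end ClosedGraph

/-- the set-valued map `x ↦ C₀(u,x)` has closed graph
(Proposition 4.1 (iii) of the paper). -/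
theorem charSet0_closed_graph
    {T a θl θr A B : ℝ} {fl fr : ℝ → ℝ}
    (hT : 0 < T)
    (hflC : ContDiff ℝ 2 fl) (hfrC : ContDiff ℝ 2 fr)
    (ha : 0 < a)
    (hfl2 : ∀ w : ℝ, a ≤ deriv (deriv fl) w)
    (hfr2 : ∀ w : ℝ, a ≤ deriv (deriv fr) w)
    (hf0 : fl 0 = fr 0) (hf1 : fl 1 = fr 1)
    (hθl : deriv fl θl = 0) (hθr : deriv fr θr = 0)
    (hθl0 : 0 ≤ θl) (hθr1 : θr ≤ 1)
    (hAB : fl A = fr B) (hA' : deriv fl A ≤ 0) (hB' : 0 ≤ deriv fr B)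
    {u0 : ℝ → ℝ} (hu0 : IsLinf u0) (sol : ABSol fl fr A B u0)
    (xs : ℕ → ℝ) (x : ℝ) (ys : ℕ → ℝ) (y : ℝ)
    (hx : Tendsto xs atTop (nhds x))
    (hmem : ∀ n, ys n ∈ charSet0 T fl fr (fl A) sol (xs n))
    (hy : Tendsto ys atTop (nhds y)) :
    y ∈ charSet0 T fl fr (fl A) sol x := by
  have hcl := convexOn_univ_of_contDiff_of_deriv2_nonneg hflC fun w => ha.le.trans (hfl2 w)
  have hcr := convexOn_univ_of_contDiff_of_deriv2_nonneg hfrC fun w => ha.le.trans (hfr2 w)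
  exact (charSet0_closed_graph_general hT.le hcl hcr (hflC.differentiable two_ne_zero)
    (hfrC.differentiable two_ne_zero) hAB hA' hB' sol).mem_of_tendsto (hx.prodMk_nhds hy)
    (Eventually.of_forall hmem)
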